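/- arXiv:1605.00088 — 2 statements merged into one kernel-verified Lean document; each statement's English description precedes it below -/
import Mathlib

section
/- For fixed k ≥ 1, the number τ_k(x) of positive integers n ≤ x with exactly k prime factors counted with multiplicity satisfies τ_k(x) ~ x (log log x)^{k-1} / ((k-1)! log x) as x → ∞. -/
open Filter Asymptotics

/-!
Convolving a bounded slowly decreasing function with Fejér kernels, whose Fourier transforms have
compact support, turns continuity of its Laplace transform up to the line `Re z = 0` into decay at
infinity. Since `L(s, Λ) - 1 / (s - 1)` is continuous on `Re s ≥ 1`, this gives the prime number
theorem, and then `∑ 1 / p ~ log log N` by partial summation.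

Let `P` be the indicator function of the primes, so that `P ^ k` (Dirichlet power) counts ordered
factorisations into `k` primes. Truncating both factors at `√N` shows that `∑ P ^ k (m) / m` is
asymptotic to `(log log N) ^ k`. Multiplication by `log` is a derivation of the Dirichlet ring, so
`∑ P ^ (k + 1) (n) log n = (k + 1) ∑ P ^ k (m) θ(N / m) ~ (k + 1) N ∑ P ^ k (m) / m`,
and removing the weight `log n` gives the asymptotics of `∑ P ^ (k + 1) (n)`. Finally `P ^ k (n)`
equals `k!` at squarefree `n` with `Ω(n) = k` and is at most `k!` at the others; the non-squarefree
ones are of the form `p m` with `Ω(m) = k - 1` and `p ∣ m`, so they are negligible by induction.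
-/

namespace Landau

section FourierLaplace

open MeasureTheory Set Topology FourierTransform
open scoped Real

variable {f φ : ℝ → ℂ} {C : ℝ} {G : ℂ → ℂ}

theorem fourier_fourierChar_smul (φ : ℝ → ℂ) (y u : ℝ) :
    𝓕 (fun ξ => 𝐞 (y * ξ) • φ ξ) u = 𝓕 φ (u - y) := by
  simp only [Real.fourier_real_eq, smul_smul, ← AddChar.map_add_eq_mul]
  congr with ξ
  ring_nf

theorem fourier_comp_div (φ : ℝ → ℂ) {l : ℝ} (hl : 0 < l) (u : ℝ) :
    𝓕 (fun ξ => φ (ξ / l)) u = l * 𝓕 φ (l * u) := by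
  have h := Measure.integral_comp_div (fun ξ => 𝐞 (-(ξ * (l * u))) • φ ξ) l
  rw [abs_of_pos hl, Complex.real_smul] at h
  rw [Real.fourier_real_eq, Real.fourier_real_eq, ← h]
  congr with ξ
  field_simp

theorem integrableOn_mul_exp_neg (hf : AEStronglyMeasurable f (volume.restrict (Ioi 0)))
    (hC : ∀ u, 0 < u → ‖f u‖ ≤ C) {z : ℂ} (hz : 0 < z.re) :
    IntegrableOn (fun u : ℝ => f u * Complex.exp (-z * u)) (Ioi 0) := by
  have hexp : IntegrableOn (fun u : ℝ => Complex.exp (-z * u)) (Ioi 0) :=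
    integrableOn_exp_mul_complex_Ioi (by simpa using hz) 0
  refine Integrable.bdd_mul (c := C) hexp hf ?_
  filter_upwards [ae_restrict_mem measurableSet_Ioi] with u hu using hC u hu

theorem integral_mul_exp_neg_mul_fourier
    (hf : AEStronglyMeasurable f (volume.restrict (Ioi 0))) (hC : ∀ u, 0 < u → ‖f u‖ ≤ C)
    (hG : ∀ z : ℂ, 0 < z.re → ∫ u in Ioi (0 : ℝ), f u * Complex.exp (-z * u) = G z)
    (hφ : Integrable φ) {σ : ℝ} (hσ : 0 < σ) :
    ∫ u in Ioi (0 : ℝ), f u * Complex.exp (-σ * u) * 𝓕 φ u =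
      ∫ ξ : ℝ, φ ξ * G (σ + 2 * π * ξ * Complex.I) := by
  have h_int := integrableOn_mul_exp_neg hf hC (z := σ) (by simpa using hσ)
  have hflip := VectorFourier.integral_fourierIntegral_smul_eq_flip (L := innerₗ ℝ)
    Real.continuous_fourierChar continuous_inner hφ (h_int.integrable_indicator measurableSet_Ioi)
  rw [← integral_indicator measurableSet_Ioi]
  calc _ = ∫ u, 𝓕 φ u * (Ioi (0 : ℝ)).indicator (fun u : ℝ => f u * Complex.exp (-σ * u)) u := by
        congr with u
        by_cases hu : u ∈ Ioi (0 : ℝ) <;> simp [hu, mul_comm]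
    _ = _ := hflip
    _ = _ := by
        congr with ξ
        rw [← hG _ (by simpa using hσ), smul_eq_mul, ← integral_indicator measurableSet_Ioi]
        congr 1
        refine integral_congr_ae (.of_forall fun u => ?_)
        by_cases hu : u ∈ Ioi (0 : ℝ)
        · simp only [hu, indicator_of_mem, Circle.smul_def, Real.fourierChar_apply, smul_eq_mul]
          rw [mul_left_comm, ← Complex.exp_add]
          congr 2
          simp only [flip_innerₗ, innerₗ_apply_apply, RCLike.inner_apply, Real.ringHom_apply]
          push_cast
          ring
        · simp [hu]

theorem tendsto_integral_mul_exp_neg_mul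
    (hf : AEStronglyMeasurable f (volume.restrict (Ioi 0))) (hC : ∀ u, 0 < u → ‖f u‖ ≤ C)
    {g : ℝ → ℂ} (hg : Integrable g) :
    Tendsto (fun σ : ℝ => ∫ u in Ioi (0 : ℝ), f u * Complex.exp (-σ * u) * g u)
      (𝓝[>] 0) (𝓝 (∫ u in Ioi (0 : ℝ), f u * g u)) := by
  refine tendsto_integral_filter_of_dominated_convergence (fun u => C * ‖g u‖) ?_ ?_
    (hg.norm.const_mul C).integrableOn ?_
  · filter_upwards with σ
    refine (hf.mul ?_).mul hg.aestronglyMeasurable.restrict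
    exact (by fun_prop : Continuous fun u : ℝ => Complex.exp (-σ * u)).aestronglyMeasurable
  · filter_upwards [self_mem_nhdsWithin] with σ hσ
    filter_upwards [ae_restrict_mem measurableSet_Ioi] with u hu
    have hexp : ‖Complex.exp (-σ * u)‖ ≤ 1 := by
      simpa [Complex.norm_exp] using mul_nonneg (mem_Ioi.1 hσ).le (mem_Ioi.1 hu).le
    rw [norm_mul, norm_mul]
    gcongr
    exact (mul_le_of_le_one_right (norm_nonneg _) hexp).trans (hC u hu)
  · filter_upwards with u
    have hcont : Continuous fun σ : ℝ => f u * Complex.exp (-σ * u) * g u := by fun_prop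
    simpa using (hcont.tendsto 0).mono_left nhdsWithin_le_nhds

theorem tendsto_integral_mul_verticalLine (hGc : ContinuousOn G {z | 0 ≤ z.re})
    (hφ : Continuous φ) (hφs : HasCompactSupport φ) :
    Tendsto (fun σ : ℝ => ∫ ξ : ℝ, φ ξ * G (σ + 2 * π * ξ * Complex.I))
      (𝓝[>] 0) (𝓝 (∫ ξ : ℝ, φ ξ * G (2 * π * ξ * Complex.I))) := by
  have hmaps (p : ℝ × ℝ) (hp : p ∈ Ici (0 : ℝ) ×ˢ univ) :
      (p.1 + 2 * π * p.2 * Complex.I : ℂ) ∈ {z : ℂ | 0 ≤ z.re} := by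
    simpa using hp.1
  have hcont := continuousOn_integral_of_compact_support (μ := volume) (s := Ici (0 : ℝ))
    (f := fun σ ξ : ℝ => φ ξ * G (σ + 2 * π * ξ * Complex.I)) hφs.isCompact
    ((hφ.comp continuous_snd).continuousOn.mul (hGc.comp (by fun_prop) hmaps))
    fun σ ξ _ hξ => by simp [image_eq_zero_of_notMem_tsupport hξ]
  simpa using (hcont 0 self_mem_Ici).tendsto.mono_left (nhdsWithin_mono _ Ioi_subset_Ici_self)

theorem integral_mul_fourier_eq
    (hf : AEStronglyMeasurable f (volume.restrict (Ioi 0))) (hC : ∀ u, 0 < u → ‖f u‖ ≤ C)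
    (hG : ∀ z : ℂ, 0 < z.re → ∫ u in Ioi (0 : ℝ), f u * Complex.exp (-z * u) = G z)
    (hGc : ContinuousOn G {z | 0 ≤ z.re})
    (hφ : Continuous φ) (hφs : HasCompactSupport φ) (hφi : Integrable (𝓕 φ)) :
    ∫ u in Ioi (0 : ℝ), f u * 𝓕 φ u = ∫ ξ : ℝ, φ ξ * G (2 * π * ξ * Complex.I) := by
  refine tendsto_nhds_unique (tendsto_integral_mul_exp_neg_mul hf hC hφi)
    ((tendsto_integral_mul_verticalLine hGc hφ hφs).congr' ?_)
  filter_upwards [self_mem_nhdsWithin] with σ hσ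
  exact (integral_mul_exp_neg_mul_fourier hf hC hG (hφ.integrable_of_hasCompactSupport hφs)
    hσ).symm

theorem tendsto_integral_mul_fourier_sub
    (hf : AEStronglyMeasurable f (volume.restrict (Ioi 0))) (hC : ∀ u, 0 < u → ‖f u‖ ≤ C)
    (hG : ∀ z : ℂ, 0 < z.re → ∫ u in Ioi (0 : ℝ), f u * Complex.exp (-z * u) = G z)
    (hGc : ContinuousOn G {z | 0 ≤ z.re})
    (hφ : Continuous φ) (hφs : HasCompactSupport φ) (hφi : Integrable (𝓕 φ)) :
    Tendsto (fun y => ∫ u in Ioi (0 : ℝ), f u * 𝓕 φ (u - y)) atTop (𝓝 0) := by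
  have hRL := (Real.zero_at_infty_fourier fun ξ : ℝ => φ ξ * G (2 * π * ξ * Complex.I)).comp
    (tendsto_neg_atTop_atBot.mono_right atBot_le_cocompact)
  refine hRL.congr fun y => ?_
  simp only [← fourier_fourierChar_smul φ y]
  have hsupp : HasCompactSupport fun ξ => 𝐞 (y * ξ) • φ ξ :=
    .intro hφs.isCompact fun ξ hξ => by simp [image_eq_zero_of_notMem_tsupport hξ]
  rw [integral_mul_fourier_eq hf hC hG hGc (by fun_prop) hsupp, Function.comp_apply,
    Real.fourier_real_eq]
  · refine integral_congr_ae (.of_forall fun ξ => ?_)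
    simp only [smul_mul_assoc]
    congr 2
    ring
  · simpa only [funext (fourier_fourierChar_smul φ y)] using hφi.comp_sub_right y

end FourierLaplace

section FejerKernel

open MeasureTheory Set FourierTransform
open scoped Real

/-- The triangle function `max (1 - |ξ|) 0`, whose Fourier transform is the Fejér kernel. -/
noncomputable def triangle (ξ : ℝ) : ℝ := max (1 - |ξ|) 0

/-- The Fejér kernel `(sin (π u) / (π u))²`, normalised as the Fourier transform of `triangle`. -/
noncomputable def fejerKernel (u : ℝ) : ℝ := Real.sinc (π * u) ^ 2

theorem continuous_triangle : Continuous triangle := by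
  unfold triangle
  fun_prop

theorem triangle_eq_zero {ξ : ℝ} (hξ : ξ ∉ Ioo (-1 : ℝ) 1) : triangle ξ = 0 :=
  max_eq_right (sub_nonpos.2 (not_lt.1 (mt abs_lt.1 hξ)))

theorem triangle_neg (ξ : ℝ) : triangle (-ξ) = triangle ξ := by
  rw [triangle, triangle, abs_neg]

theorem triangle_of_mem {ξ : ℝ} (hξ : ξ ∈ Icc (0 : ℝ) 1) : triangle ξ = 1 - ξ := by
  rw [triangle, abs_of_nonneg hξ.1, max_eq_left (sub_nonneg.2 hξ.2)]

theorem hasCompactSupport_triangle : HasCompactSupport triangle :=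
  .intro isCompact_Icc fun _ hξ => triangle_eq_zero (mt (Ioo_subset_Icc_self ·) hξ)

theorem integral_one_sub_mul_exp {c : ℂ} (hc : c ≠ 0) :
    ∫ t in (0 : ℝ)..1, (1 - t) * Complex.exp (c * t) = (Complex.exp c - 1) / c ^ 2 - 1 / c := by
  have hderiv (t : ℝ) : HasDerivAt
      (fun t : ℝ => (1 - t) * Complex.exp (c * t) / c + Complex.exp (c * t) / c ^ 2)
      ((1 - t) * Complex.exp (c * t)) t := by
    have hexp : HasDerivAt (fun t : ℝ => Complex.exp (c * t)) (Complex.exp (c * t) * c) t := by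
      simpa using ((hasDerivAt_id (t : ℂ)).const_mul c).cexp.comp_ofReal
    have hlin : HasDerivAt (fun t : ℝ => (1 - (t : ℂ))) (-1) t := by
      simpa using ((hasDerivAt_id (t : ℂ)).const_sub 1).comp_ofReal
    convert! ((hlin.mul hexp).div_const c).add (hexp.div_const (c ^ 2)) using 1
    field_simp
    ring
  rw [intervalIntegral.integral_eq_sub_of_hasDerivAt (fun t _ => hderiv t)
    (Continuous.intervalIntegrable (by fun_prop) _ _)]
  simp only [Complex.ofReal_one, Complex.ofReal_zero, sub_self, sub_zero, zero_mul, mul_zero,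
    mul_one, zero_div, Complex.exp_zero]
  ring

theorem integral_triangle_mul (g : ℝ → ℂ) (hg : Continuous g) :
    ∫ ξ, (triangle ξ : ℂ) * g ξ = ∫ t in (0 : ℝ)..1, (1 - t) * (g t + g (-t)) := by
  have htri : Continuous fun ξ => (triangle ξ : ℂ) := by
    have := continuous_triangle
    fun_prop
  have h_int (a b : ℝ) : IntervalIntegrable (fun ξ => (triangle ξ : ℂ) * g ξ) volume a b :=
    (htri.mul hg).intervalIntegrable a b
  have h_int_neg (a b : ℝ) : IntervalIntegrable (fun ξ => (triangle ξ : ℂ) * g (-ξ)) volume a b :=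
    (htri.mul (hg.comp continuous_neg)).intervalIntegrable a b
  calc _ = ∫ ξ in (-1 : ℝ)..1, (triangle ξ : ℂ) * g ξ := by
        rw [intervalIntegral.integral_eq_integral_of_support_subset fun ξ hξ => ?_]
        contrapose! hξ
        simp [triangle_eq_zero (mt (Ioo_subset_Ioc_self ·) hξ)]
    _ = (∫ t in (0 : ℝ)..1, (triangle t : ℂ) * g (-t)) + ∫ t in (0 : ℝ)..1, triangle t * g t := by
        rw [← intervalIntegral.integral_add_adjacent_intervals (h_int (-1) 0) (h_int 0 1)]
        congr 1
        simpa [triangle_neg] using (intervalIntegral.integral_comp_neg (a := 0) (b := 1)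
          fun ξ => (triangle ξ : ℂ) * g ξ).symm
    _ = ∫ t in (0 : ℝ)..1, triangle t * (g t + g (-t)) := by
        rw [← intervalIntegral.integral_add (h_int_neg 0 1) (h_int 0 1)]
        congr with t
        ring
    _ = _ := by
        refine intervalIntegral.integral_congr fun t ht => ?_
        rw [uIcc_of_le zero_le_one] at ht
        simp [triangle_of_mem ht]

theorem fourier_triangle (u : ℝ) : 𝓕 (fun ξ => (triangle ξ : ℂ)) u = fejerKernel u := by
  have hcont (c : ℂ) : Continuous fun t : ℝ => (1 - t) * Complex.exp (c * t) := by fun_prop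
  have hhalves : 𝓕 (fun ξ => (triangle ξ : ℂ)) u =
      (∫ t in (0 : ℝ)..1, (1 - t) * Complex.exp (2 * π * u * Complex.I * t)) +
        ∫ t in (0 : ℝ)..1, (1 - t) * Complex.exp (-(2 * π * u * Complex.I) * t) := by
    rw [Real.fourier_real_eq_integral_exp_smul,
      ← intervalIntegral.integral_add ((hcont _).intervalIntegrable _ _)
        ((hcont _).intervalIntegrable _ _)]
    simp only [smul_eq_mul, mul_comm (Complex.exp _) (triangle _ : ℂ)]
    rw [integral_triangle_mul _ (by fun_prop)]
    refine intervalIntegral.integral_congr fun t _ => ?_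
    simp only [← mul_add]
    rw [add_comm]
    congr 3 <;> · push_cast; ring
  rw [hhalves]
  rcases eq_or_ne u 0 with rfl | hu
  · have hhalf : ∫ t in (0 : ℝ)..1, (1 - t : ℂ) = 1 / 2 := by
      rw [intervalIntegral.integral_sub (by simp)
        (Complex.continuous_ofReal.intervalIntegrable 0 1), intervalIntegral.integral_ofReal]
      norm_num
    simp only [Complex.ofReal_zero, mul_zero, zero_mul, neg_zero, Complex.exp_zero, mul_one, hhalf,
      fejerKernel, Real.sinc_zero, one_pow, Complex.ofReal_one, add_halves]
  · have hc : 2 * π * u * Complex.I ≠ 0 := by simp [hu, Real.pi_ne_zero]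
    rw [integral_one_sub_mul_exp hc, integral_one_sub_mul_exp (neg_ne_zero.2 hc), fejerKernel,
      Real.sinc_of_ne_zero (by simp [hu, Real.pi_ne_zero])]
    have hsum : Complex.exp (2 * π * u * Complex.I) + Complex.exp (-(2 * π * u * Complex.I)) =
        2 - 4 * Complex.sin (π * u) ^ 2 := by
      rw [show (2 * π * u * Complex.I : ℂ) = (2 * (π * u)) * Complex.I by ring, ← neg_mul,
        ← Complex.two_cos, Complex.cos_two_mul, Complex.cos_sq']
      ring
    have hu0 : (u : ℂ) ≠ 0 := by exact_mod_cast hu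
    have hπ : (π : ℂ) ≠ 0 := by exact_mod_cast Real.pi_ne_zero
    push_cast
    field_simp
    rw [Complex.I_sq]
    linear_combination hsum

theorem fejerKernel_nonneg (u : ℝ) : 0 ≤ fejerKernel u := sq_nonneg _

theorem continuous_fejerKernel : Continuous fejerKernel := by
  unfold fejerKernel
  fun_prop

theorem fejerKernel_le (u : ℝ) : fejerKernel u ≤ 2 * (1 + u ^ 2)⁻¹ := by
  have hle : fejerKernel u ≤ 1 := (sq_le_one_iff_abs_le_one _).2 (Real.abs_sinc_le_one _)
  have hdecay : u ^ 2 * fejerKernel u ≤ 1 := by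
    rcases eq_or_ne u 0 with rfl | hu
    · simp
    · rw [fejerKernel, Real.sinc_of_ne_zero (by simp [hu, Real.pi_ne_zero]),
        show u ^ 2 * (Real.sin (π * u) / (π * u)) ^ 2 = (Real.sin (π * u) / π) ^ 2 by field_simp,
        div_pow]
      exact div_le_one_of_le₀ (by nlinarith [Real.sin_sq_le_one (π * u), Real.pi_gt_three])
        (by positivity)
  rw [← div_eq_mul_inv, le_div_iff₀ (by positivity)]
  linarith

theorem integrable_fejerKernel : Integrable fejerKernel := by
  refine (integrable_inv_one_add_sq.const_mul 2).mono' continuous_fejerKernel.aestronglyMeasurable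
    (.of_forall fun u => ?_)
  rw [Real.norm_of_nonneg (fejerKernel_nonneg u)]
  exact fejerKernel_le u

theorem integral_fejerKernel_pos : 0 < ∫ u, fejerKernel u :=
  integral_pos_of_integrable_nonneg_nonzero continuous_fejerKernel integrable_fejerKernel
    fejerKernel_nonneg (x := 0) (by simp [fejerKernel])

end FejerKernel

section Tauberian

open MeasureTheory Set Topology FourierTransform

/-- A function is *slowly decreasing* if, far out, it cannot drop by more than a prescribed `ε`
over intervals of some length `δ = δ(ε)`: the one-sided condition under which convergence of
averages of `f` implies convergence of `f`. -/
def SlowlyDecreasing (f : ℝ → ℝ) : Prop :=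
  ∀ ε > 0, ∃ δ > 0, ∀ᶠ u in atTop, ∀ v ∈ Icc u (u + δ), f u - ε ≤ f v

theorem mul_integral_le_integral_mul_add {K h : ℝ → ℝ} {C c r : ℝ} (hK : 0 ≤ K)
    (hKi : Integrable K) (hh : AEStronglyMeasurable h) (hC : ∀ v, |h v| ≤ C)
    (hc : ∀ v ∈ Icc (-r) r, c ≤ h v) :
    c * ∫ v, K v ≤ (∫ v, h v * K v) + (|c| + C) * ∫ v in (Icc (-r) r)ᶜ, K v := by
  have hhK : Integrable fun v => h v * K v :=
    hKi.bdd_mul (c := C) hh (.of_forall fun v => hC v)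
  have htail : Integrable ((Icc (-r) r)ᶜ.indicator K) := hKi.indicator measurableSet_Icc.compl
  rw [← integral_indicator measurableSet_Icc.compl, ← integral_const_mul, ← integral_const_mul,
    ← integral_add hhK (htail.const_mul _)]
  refine integral_mono (hKi.const_mul c) (hhK.add (htail.const_mul _)) fun v => ?_
  by_cases hv : v ∈ Icc (-r) r
  · simpa [hv] using mul_le_mul_of_nonneg_right (hc v hv) (hK v)
  · have : c ≤ h v + (|c| + C) := by linarith [le_abs_self c, neg_le_of_abs_le (hC v)]
    simpa [hv, add_mul] using mul_le_mul_of_nonneg_right this (hK v)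

theorem tendsto_setIntegral_compl_Icc {K : ℝ → ℝ} (hK : Integrable K) :
    Tendsto (fun r => ∫ v in (Icc (-r) r)ᶜ, K v) atTop (𝓝 0) := by
  have hcover := aecover_Icc (μ := volume) (tendsto_neg_atTop_atBot (G := ℝ)) tendsto_id
  have hdiff := (hcover.integral_tendsto_of_countably_generated hK).const_sub (∫ v, K v)
  rw [sub_self] at hdiff
  refine hdiff.congr fun r => ?_
  rw [sub_eq_iff_eq_add', id, integral_add_compl measurableSet_Icc hK]

theorem eventually_le_of_tendsto_integral_mul {K f : ℝ → ℝ} {C ε δ : ℝ} (hK : 0 ≤ K)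
    (hKi : Integrable K) (hKpos : 0 < ∫ v, K v) (hf : Measurable f) (hC : ∀ u, |f u| ≤ C)
    (hconv : ∀ l > 0, Tendsto (fun y => ∫ v, f (y + v / l) * K v) atTop (𝓝 0))
    (hε : 0 < ε) (hδ : 0 < δ) :
    ∀ᶠ y in atTop, ∀ c, (∀ v ∈ Icc (y - δ) (y + δ), c ≤ f v) → c ≤ ε := by
  have htail := (tendsto_setIntegral_compl_Icc hKi).const_mul (2 * C)
  rw [mul_zero] at htail
  obtain ⟨r, hr, hr0⟩ := ((htail.eventually_lt_const
    (show (0 : ℝ) < ε / 2 * ∫ v, K v by positivity)).and (eventually_gt_atTop 0)).exists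
  have hl : 0 < r / δ := by positivity
  filter_upwards [(hconv _ hl).eventually_lt_const (show (0 : ℝ) < ε / 2 * ∫ v, K v by positivity)]
    with y hy c hc
  by_contra! hεc
  have hcC : |c| ≤ C := by
    rw [abs_of_pos (hε.trans hεc)]
    exact (hc y ⟨by linarith, by linarith⟩).trans ((le_abs_self _).trans (hC y))
  have hmain := mul_integral_le_integral_mul_add (h := fun v => f (y + v / (r / δ))) (c := c)
    (r := r) hK hKi (hf.comp (by fun_prop)).aestronglyMeasurable
    (fun v => hC _) fun v hv => hc _ ?_
  · have hT : 0 ≤ ∫ v in (Icc (-r) r)ᶜ, K v := integral_nonneg hK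
    have hweight : (|c| + C) * ∫ v in (Icc (-r) r)ᶜ, K v ≤
        2 * C * ∫ v in (Icc (-r) r)ᶜ, K v := by
      gcongr
      linarith
    have hlt : ε * ∫ v, K v < c * ∫ v, K v := by gcongr
    linarith
  · have hscale : v / (r / δ) = v / r * δ := by field_simp
    have habs : |v / r| ≤ 1 := by
      rw [abs_div, abs_of_pos hr0]
      exact div_le_one_of_le₀ (abs_le.2 hv) hr0.le
    rw [hscale]
    constructor <;> nlinarith [abs_le.1 habs]

theorem SlowlyDecreasing.tendsto_zero {K f : ℝ → ℝ} {C : ℝ} (hslow : SlowlyDecreasing f)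
    (hK : 0 ≤ K) (hKi : Integrable K) (hKpos : 0 < ∫ v, K v) (hf : Measurable f)
    (hC : ∀ u, |f u| ≤ C)
    (hconv : ∀ l > 0, Tendsto (fun y => ∫ v, f (y + v / l) * K v) atTop (𝓝 0)) :
    Tendsto f atTop (𝓝 0) := by
  have hconv_neg (l : ℝ) (hl : 0 < l) :
      Tendsto (fun y => ∫ v, -f (y + v / l) * K v) atTop (𝓝 0) := by
    simpa [integral_neg] using (hconv l hl).neg
  refine Metric.tendsto_nhds.2 fun ε hε => ?_
  obtain ⟨δ, hδ, hdrop⟩ := hslow (ε / 3) (by positivity)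
  have hε3 : 0 < ε / 3 := by positivity
  have hupper := eventually_le_of_tendsto_integral_mul hK hKi hKpos hf hC hconv hε3 (half_pos hδ)
  have hlower := eventually_le_of_tendsto_integral_mul hK hKi hKpos hf.neg
    (fun u => (abs_neg (f u)).trans_le (hC u)) hconv_neg hε3 (half_pos hδ)
  filter_upwards [hdrop, (tendsto_atTop_add_const_right _ (-δ) tendsto_id).eventually
      (eventually_forall_ge_atTop.2 hdrop),
    (tendsto_atTop_add_const_right _ (δ / 2) tendsto_id).eventually hupper,
    (tendsto_atTop_add_const_right _ (-(δ / 2)) tendsto_id).eventually hlower]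
    with u hright hleft hup hlow
  simp only [id] at hleft hup hlow
  have hle : f u - ε / 3 ≤ ε / 3 :=
    hup _ fun v hv => hright v ⟨by linarith [hv.1], by linarith [hv.2]⟩
  have hge : -f u - ε / 3 ≤ ε / 3 := hlow _ fun v hv => by
    rw [Pi.neg_apply]
    linarith [hleft v (by linarith [hv.1]) u ⟨by linarith [hv.2], by linarith [hv.1]⟩]
  rw [dist_zero_right, Real.norm_eq_abs, abs_lt]
  constructor <;> linarith

theorem integral_comp_add_div_mul (g K : ℝ → ℝ) {l : ℝ} (hl : 0 < l) (y : ℝ) :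
    ∫ v, g (y + v / l) * K v = ∫ u, g u * (l * K (l * (u - y))) := by
  have hshift := integral_sub_right_eq_self (μ := volume)
    (fun w => g (w + y) * (l * K (l * w))) y
  have hscale := Measure.integral_comp_mul_left (fun v => l * (g (y + v / l) * K v)) l
  rw [integral_const_mul l fun v => g (y + v / l) * K v, abs_of_pos (inv_pos.2 hl), smul_eq_mul,
    inv_mul_cancel_left₀ hl.ne'] at hscale
  simp only [sub_add_cancel] at hshift
  rw [hshift, ← hscale]
  congr with w
  rw [mul_div_cancel_left₀ _ hl.ne', add_comm]
  ring

theorem tendsto_integral_indicator_mul_fejerKernel {f : ℝ → ℝ} {C : ℝ} {G : ℂ → ℂ}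
    (hf : Measurable f) (hC : ∀ u, 0 < u → |f u| ≤ C)
    (hG : ∀ z : ℂ, 0 < z.re → ∫ u in Ioi (0 : ℝ), (f u : ℂ) * Complex.exp (-z * u) = G z)
    (hGc : ContinuousOn G {z | 0 ≤ z.re}) {l : ℝ} (hl : 0 < l) :
    Tendsto (fun y => ∫ v, (Ioi (0 : ℝ)).indicator f (y + v / l) * fejerKernel v)
      atTop (𝓝 0) := by
  have hfourier (u : ℝ) :
      𝓕 (fun ξ => (triangle (ξ / l) : ℂ)) u = ((l * fejerKernel (l * u) : ℝ) : ℂ) := by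
    rw [fourier_comp_div (fun ξ => (triangle ξ : ℂ)) hl, fourier_triangle]
    push_cast
    rfl
  have hcont : Continuous fun ξ => (triangle (ξ / l) : ℂ) := by
    have := continuous_triangle
    fun_prop
  have hsupp : HasCompactSupport fun ξ => (triangle (ξ / l) : ℂ) :=
    (hasCompactSupport_triangle.comp_homeomorph
      (Homeomorph.mulRight₀ l⁻¹ (by positivity))).comp_left Complex.ofReal_zero
  have h_int : Integrable (𝓕 fun ξ => (triangle (ξ / l) : ℂ)) := by
    rw [funext hfourier]
    exact ((integrable_fejerKernel.comp_mul_left' hl.ne').const_mul l).ofReal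
  have hlim := tendsto_integral_mul_fourier_sub (C := C) (by fun_prop)
    (fun u hu => by simpa using hC u hu) hG hGc hcont hsupp h_int
  rw [← Complex.ofReal_zero] at hlim
  refine tendsto_ofReal_iff.1 (hlim.congr fun y => ?_)
  rw [integral_comp_add_div_mul _ _ hl, ← integral_complex_ofReal,
    ← integral_indicator measurableSet_Ioi]
  refine integral_congr_ae (.of_forall fun u => ?_)
  by_cases hu : u ∈ Ioi (0 : ℝ) <;> simp [hu, hfourier]

theorem SlowlyDecreasing.tendsto_zero_of_laplace {f : ℝ → ℝ} {C : ℝ} {G : ℂ → ℂ}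
    (hslow : SlowlyDecreasing f) (hf : Measurable f) (hC : ∀ u, 0 < u → |f u| ≤ C)
    (hG : ∀ z : ℂ, 0 < z.re → ∫ u in Ioi (0 : ℝ), (f u : ℂ) * Complex.exp (-z * u) = G z)
    (hGc : ContinuousOn G {z | 0 ≤ z.re}) : Tendsto f atTop (𝓝 0) := by
  have hC0 : 0 ≤ C := (abs_nonneg _).trans (hC 1 one_pos)
  set g := (Ioi (0 : ℝ)).indicator f with hg
  have hgf : g =ᶠ[atTop] f := (eventually_gt_atTop 0).mono fun u hu => by simp [hg, hu]
  have hslow_g : SlowlyDecreasing g := fun ε hε => by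
    obtain ⟨δ, hδ, h⟩ := hslow ε hε
    refine ⟨δ, hδ, ?_⟩
    filter_upwards [h, eventually_gt_atTop 0] with u hu hu0 v hv
    simpa [hg, hu0, hu0.trans_le hv.1] using hu v hv
  have hCg (u : ℝ) : |g u| ≤ C := by
    by_cases hu : 0 < u <;> simp [hg, hu, hC0, hC]
  refine (hslow_g.tendsto_zero fejerKernel_nonneg integrable_fejerKernel integral_fejerKernel_pos
    (hf.indicator measurableSet_Ioi) hCg fun l hl => ?_).congr' hgf
  exact tendsto_integral_indicator_mul_fejerKernel hf hC hG hGc hl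

end Tauberian

section WienerIkehara

open MeasureTheory Set Topology

/-- The partial sums `∑ k ≤ x, a k` at `x = exp u`, divided by `x`: in the variable `u = log x` the
Dirichlet series of `a` becomes a Laplace transform. -/
noncomputable def meanAtExp (a : ℕ → ℝ) (u : ℝ) : ℝ :=
  (∑ k ∈ Finset.Icc 1 ⌊Real.exp u⌋₊, a k) * Real.exp (-u)

variable {a : ℕ → ℝ} {C : ℝ}

theorem meanAtExp_nonneg (ha : ∀ n, 0 ≤ a n) (u : ℝ) : 0 ≤ meanAtExp a u :=
  mul_nonneg (Finset.sum_nonneg fun _ _ => ha _) (Real.exp_pos _).le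

theorem meanAtExp_le (hC : ∀ n : ℕ, ∑ k ∈ Finset.Icc 1 n, a k ≤ C * n) (hC0 : 0 ≤ C) (u : ℝ) :
    meanAtExp a u ≤ C := by
  calc meanAtExp a u ≤ C * Real.exp u * Real.exp (-u) := by
        unfold meanAtExp
        gcongr
        exact (hC _).trans (by gcongr; exact Nat.floor_le (Real.exp_pos u).le)
    _ = C := by rw [mul_assoc, ← Real.exp_add, add_neg_cancel, Real.exp_zero, mul_one]

theorem monotone_sum_Icc_floor (ha : ∀ n, 0 ≤ a n) :
    Monotone fun x : ℝ => ∑ k ∈ Finset.Icc 1 ⌊x⌋₊, a k := fun _ _ hxy =>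
  Finset.sum_le_sum_of_subset_of_nonneg (Finset.Icc_subset_Icc_right (Nat.floor_mono hxy))
    fun _ _ _ => ha _

theorem measurable_meanAtExp (ha : ∀ n, 0 ≤ a n) : Measurable (meanAtExp a) := by
  have := (monotone_sum_Icc_floor ha).measurable
  unfold meanAtExp
  fun_prop

theorem slowlyDecreasing_meanAtExp (ha : ∀ n, 0 ≤ a n)
    (hC : ∀ n : ℕ, ∑ k ∈ Finset.Icc 1 n, a k ≤ C * n) (hC0 : 0 < C) :
    SlowlyDecreasing (meanAtExp a) := by
  refine fun ε hε => ⟨ε / C, by positivity, .of_forall fun u v hv => ?_⟩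
  have hsum := monotone_sum_Icc_floor ha (Real.exp_le_exp.2 hv.1)
  have hexp : 1 - (v - u) ≤ Real.exp (u - v) := by linarith [Real.add_one_le_exp (u - v)]
  have hCvu : C * (v - u) ≤ ε := by
    rw [mul_comm, ← le_div_iff₀ hC0]
    linarith [hv.2]
  calc meanAtExp a u - ε ≤ meanAtExp a u - meanAtExp a u * (v - u) := by
        gcongr
        exact (mul_le_mul_of_nonneg_right (meanAtExp_le hC hC0.le u) (sub_nonneg.2 hv.1)).trans hCvu
    _ = meanAtExp a u * (1 - (v - u)) := by ring
    _ ≤ meanAtExp a u * Real.exp (u - v) := by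
        gcongr
        exact meanAtExp_nonneg ha u
    _ = (∑ k ∈ Finset.Icc 1 ⌊Real.exp u⌋₊, a k) * Real.exp (-v) := by
        rw [meanAtExp, mul_assoc, ← Real.exp_add]
        ring_nf
    _ ≤ meanAtExp a v := mul_le_mul_of_nonneg_right hsum (Real.exp_pos _).le

theorem LSeries_eq_mul_laplace_meanAtExp (ha : ∀ n, 0 ≤ a n)
    (hC : ∀ n : ℕ, ∑ k ∈ Finset.Icc 1 n, a k ≤ C * n) {z : ℂ} (hz : 0 < z.re) :
    LSeries (fun n => a n) (1 + z) =
      (1 + z) * ∫ u in Ioi (0 : ℝ), (meanAtExp a u : ℂ) * Complex.exp (-z * u) := by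
  have hO : (fun n => ∑ k ∈ Finset.Icc 1 n, a k) =O[atTop] fun n => (n : ℝ) ^ (1 : ℝ) := by
    refine .of_bound C (.of_forall fun n => ?_)
    rw [Real.norm_of_nonneg (Finset.sum_nonneg fun _ _ => ha _), Real.rpow_one,
      Real.norm_of_nonneg n.cast_nonneg]
    exact hC n
  have hIoi : Ioi (1 : ℝ) = Real.exp '' Ioi 0 := by simp
  rw [LSeries_eq_mul_integral_of_nonneg a zero_le_one (by simpa using hz) hO ha, hIoi,
    integral_image_eq_integral_abs_deriv_smul measurableSet_Ioi
      (fun x _ => (Real.hasDerivAt_exp x).hasDerivWithinAt) Real.exp_injective.injOn]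
  congr 1
  refine setIntegral_congr_fun measurableSet_Ioi fun u _ => ?_
  have hcpow : ((Real.exp u : ℝ) : ℂ) ^ (-(1 + z + 1)) =
      Complex.exp (-u) * Complex.exp (-u) * Complex.exp (-z * u) := by
    rw [Complex.cpow_def_of_ne_zero (by exact_mod_cast (Real.exp_pos u).ne'),
      ← Complex.ofReal_log (Real.exp_pos u).le, Real.log_exp, ← Complex.exp_add, ← Complex.exp_add]
    ring_nf
  simp only [hcpow, meanAtExp, Real.abs_exp, Complex.real_smul]
  push_cast
  rw [Complex.exp_neg]
  field_simp [Complex.exp_ne_zero]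

theorem integral_meanAtExp_sub_one_mul_exp (ha : ∀ n, 0 ≤ a n)
    (hC : ∀ n : ℕ, ∑ k ∈ Finset.Icc 1 n, a k ≤ C * n) (hC0 : 0 ≤ C) {z : ℂ} (hz : 0 < z.re) :
    ∫ u in Ioi (0 : ℝ), ((meanAtExp a u - 1 : ℝ) : ℂ) * Complex.exp (-z * u) =
      (LSeries (fun n => a n) (1 + z) - 1 / z - 1) / (1 + z) := by
  have hz0 : z ≠ 0 := by
    rintro rfl
    exact lt_irrefl _ hz
  have hz1 : 1 + z ≠ 0 := fun h => by
    have hre := congrArg Complex.re h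
    simp only [Complex.add_re, Complex.one_re, Complex.zero_re] at hre
    linarith
  have h_int := integrableOn_mul_exp_neg (f := fun u => meanAtExp a u) (C := C)
    (Complex.measurable_ofReal.comp (measurable_meanAtExp ha)).aestronglyMeasurable
    (fun u _ => by
      simpa [abs_of_nonneg (meanAtExp_nonneg ha u)] using meanAtExp_le hC hC0 u) hz
  have hexp : IntegrableOn (fun u : ℝ => Complex.exp (-z * u)) (Ioi 0) :=
    integrableOn_exp_mul_complex_Ioi (by simpa using hz) 0
  simp only [Complex.ofReal_sub, Complex.ofReal_one, sub_mul, one_mul]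
  rw [integral_sub h_int hexp, integral_exp_mul_complex_Ioi (by simpa using hz),
    LSeries_eq_mul_laplace_meanAtExp ha hC hz]
  simp only [Complex.ofReal_zero, mul_zero, Complex.exp_zero]
  field_simp
  ring

/-- The case of the Wiener–Ikehara theorem in which the bound `∑ k ≤ n, a k = O(n)` is already
known. -/
theorem tendsto_sum_div_of_LSeries_sub_pole {H : ℂ → ℂ} (ha : ∀ n, 0 ≤ a n)
    (hC : ∀ n : ℕ, ∑ k ∈ Finset.Icc 1 n, a k ≤ C * n) (hH : ContinuousOn H {s | 1 ≤ s.re})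
    (hL : ∀ s : ℂ, 1 < s.re → H s = LSeries (fun n => a n) s - 1 / (s - 1)) :
    Tendsto (fun x : ℝ => (∑ k ∈ Finset.Icc 1 ⌊x⌋₊, a k) / x) atTop (𝓝 1) := by
  wlog hC0 : 0 < C generalizing C
  · exact this (C := 1) (fun n => (hC n).trans (by gcongr; linarith)) one_pos
  have hslow : SlowlyDecreasing fun u => meanAtExp a u - 1 := fun ε hε => by
    simpa [sub_right_comm] using slowlyDecreasing_meanAtExp ha hC hC0 ε hε
  have hbound (u : ℝ) : |meanAtExp a u - 1| ≤ C + 1 := by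
    rw [abs_le]
    constructor <;> linarith [meanAtExp_nonneg ha u, meanAtExp_le hC hC0.le u]
  have hlaplace (z : ℂ) (hz : 0 < z.re) :
      ∫ u in Ioi (0 : ℝ), ((meanAtExp a u - 1 : ℝ) : ℂ) * Complex.exp (-z * u) =
        (H (1 + z) - 1) / (1 + z) := by
    rw [integral_meanAtExp_sub_one_mul_exp ha hC hC0.le hz, hL _ (by simpa using hz),
      add_sub_cancel_left]
  have hcont : ContinuousOn (fun z => (H (1 + z) - 1) / (1 + z)) {z : ℂ | 0 ≤ z.re} := by
    refine ((hH.comp (f := fun z => 1 + z) (by fun_prop) fun z hz => ?_).sub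
      continuousOn_const).div (by fun_prop) fun z hz h => ?_
    · simpa using hz
    · have := congrArg Complex.re h
      simp only [mem_ofPred_eq, Complex.add_re, Complex.one_re, Complex.zero_re] at hz this
      linarith
  have hzero := (hslow.tendsto_zero_of_laplace ((measurable_meanAtExp ha).sub_const 1)
    (fun u _ => hbound u) hlaplace hcont).add_const 1
  have hlog := hzero.comp Real.tendsto_log_atTop
  rw [zero_add] at hlog
  refine hlog.congr' ?_
  filter_upwards [eventually_gt_atTop 0] with x hx
  simp [meanAtExp, Real.exp_neg, Real.exp_log hx, div_eq_mul_inv]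

end WienerIkehara

section PrimeNumberTheorem

open Chebyshev ArithmeticFunction Set

theorem psi_isEquivalent : psi ~[atTop] id := by
  have hresidue (n : ℕ) : vonMangoldt.residueClass (1 : ZMod 1) n = vonMangoldt n := by
    rw [vonMangoldt.residueClass, indicator_of_mem]
    exact Subsingleton.elim _ _
  have hbound (n : ℕ) : ∑ k ∈ Finset.Icc 1 n, vonMangoldt k ≤ (Real.log 4 + 4) * n := by
    simpa [psi, ← Finset.Icc_add_one_left_eq_Ioc] using psi_le_const_mul_self n.cast_nonneg
  refine isEquivalent_of_tendsto_one (tendsto_sum_div_of_LSeries_sub_pole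
    (fun _ => vonMangoldt_nonneg) hbound
    (vonMangoldt.continuousOn_LFunctionResidueClassAux (1 : ZMod 1)) fun s hs => ?_)
  simpa [hresidue] using vonMangoldt.eqOn_LFunctionResidueClassAux (q := 1) isUnit_one hs

theorem theta_isEquivalent : theta ~[atTop] id := by
  have hsqrt : Real.sqrt =o[atTop] (id : ℝ → ℝ) := by
    refine (isLittleO_iff_tendsto' ?_).2 ?_
    · filter_upwards [eventually_gt_atTop 0] with x hx h using absurd h hx.ne'
    · simpa [Real.sqrt_div_self, Pi.inv_def] using Real.tendsto_sqrt_atTop.inv_tendsto_atTop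
  simpa using psi_isEquivalent.sub_isLittleO
    (isBigO_psi_sub_theta_sqrt.trans_isLittleO hsqrt)

theorem primeCounting_isEquivalent :
    (fun x : ℝ => (⌊x⌋₊.primeCounting : ℝ)) ~[atTop] fun x => x / Real.log x := by
  have herror : (fun x : ℝ => x / Real.log x ^ 2) =o[atTop] fun x => x / Real.log x := by
    have h := (isBigO_refl (fun x : ℝ => x / Real.log x) atTop).mul_isLittleO
      ((isLittleO_one_iff ℝ).2 Real.tendsto_log_atTop.inv_tendsto_atTop)
    refine h.congr (fun x => ?_) fun x => mul_one _
    rw [Pi.inv_apply, ← div_eq_mul_inv, div_div, sq]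
  have hmain : (fun x => theta x / Real.log x) ~[atTop] fun x => x / Real.log x :=
    theta_isEquivalent.div .refl
  refine ((primeCounting_sub_theta_div_log_isBigO.trans_isLittleO herror).add_isEquivalent
    hmain).congr_left (.of_forall fun x => ?_)
  exact sub_add_cancel _ _

end PrimeNumberTheorem

section PrimeReciprocals

open Topology
open Real (log)

/-- The sum of `f n / n` over `1 ≤ n ≤ N`, i.e. the logarithmically weighted partial sum of `f`. -/
noncomputable def reciprocalSum (f : ℕ → ℝ) (N : ℕ) : ℝ := ∑ n ∈ Finset.Ioc 0 N, f n / n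

theorem reciprocalSum_eq (f : ℕ → ℝ) (N : ℕ) :
    reciprocalSum f N = (∑ n ∈ Finset.Ioc 0 N, f n) / N +
      ∑ n ∈ Finset.range N, (∑ m ∈ Finset.Ioc 0 n, f m) / (n * (n + 1)) := by
  induction N with
  | zero => simp [reciprocalSum]
  | succ N ih =>
    rw [reciprocalSum] at ih ⊢
    rw [Finset.sum_Ioc_succ_top N.zero_le, Finset.sum_Ioc_succ_top N.zero_le,
      Finset.sum_range_succ, ih]
    rcases N.eq_zero_or_pos with rfl | hN
    · simp
    · push_cast
      field_simp
      ring

theorem isEquivalent_sum_range {u v : ℕ → ℝ} (huv : u ~[atTop] v) (hv : ∀ᶠ n in atTop, 0 ≤ v n)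
    (hsum : Tendsto (fun N => ∑ n ∈ Finset.range N, v n) atTop atTop) :
    (fun N => ∑ n ∈ Finset.range N, u n) ~[atTop] fun N => ∑ n ∈ Finset.range N, v n := by
  obtain ⟨n₀, hn₀⟩ := eventually_atTop.1 hv
  have habs : ∀ᶠ N in atTop, ∑ n ∈ Finset.range N, |v n| =
      ∑ n ∈ Finset.range N, v n + ∑ n ∈ Finset.range n₀, (|v n| - v n) := by
    filter_upwards [eventually_ge_atTop n₀] with N hN
    rw [← sub_eq_iff_eq_add', ← Finset.sum_sub_distrib]
    refine (Finset.sum_subset (Finset.range_mono hN) fun n _ hn => ?_).symm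
    rw [abs_of_nonneg (hn₀ n (by simpa using hn)), sub_self]
  have habs_top : Tendsto (fun N => ∑ n ∈ Finset.range N, |v n|) atTop atTop :=
    (tendsto_atTop_add_const_right _ _ hsum).congr' (habs.mono fun _ h => h.symm)
  have hO : (fun N => ∑ n ∈ Finset.range N, |v n|) =O[atTop]
      fun N => ∑ n ∈ Finset.range N, v n :=
    ((isBigO_refl _ _).add (isLittleO_const_left.2
      (.inr (tendsto_norm_atTop_atTop.comp hsum))).isBigO).congr' (habs.mono fun _ h => h.symm) .rfl
  have ho := huv.isLittleO.abs_right.sum_range (fun n => abs_nonneg (v n)) habs_top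
  exact (ho.trans_isBigO hO).congr_left fun N => Finset.sum_sub_distrib ..

theorem log_sub_log_isEquivalent {α : Type*} {l : Filter α} {u v : α → ℝ}
    (hu : ∀ᶠ i in l, u i ≠ 0) (h : Tendsto (fun i => (v i - u i) / u i) l (𝓝 0)) :
    (fun i => log (v i) - log (u i)) ~[l] fun i => (v i - u i) / u i := by
  have hlog : (fun x : ℝ => log (1 + x)) ~[𝓝 0] fun x => x := by
    simpa [IsEquivalent, Pi.sub_def] using
      hasDerivAt_iff_isLittleO_nhds_zero.1 (Real.hasDerivAt_log one_ne_zero)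
  have hne : ∀ᶠ i in l, 1 + (v i - u i) / u i ≠ 0 :=
    (h.const_add 1).eventually_ne (by norm_num)
  refine (hlog.comp_tendsto h).congr_left ?_
  filter_upwards [hu, hne] with i hi hratio
  have hdiv : 1 + (v i - u i) / u i = v i / u i := by field_simp; ring
  have hvi : v i ≠ 0 := fun hv => hratio (by rw [hdiv, hv, zero_div])
  rw [Function.comp_apply, hdiv, Real.log_div hvi hi]

theorem log_log_add_one_sub_isEquivalent :
    (fun n : ℕ => log (log (n + 1 : ℕ)) - log (log n)) ~[atTop] fun n => (n * log n)⁻¹ := by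
  have hlog_top : Tendsto (fun n : ℕ => log n) atTop atTop :=
    Real.tendsto_log_atTop.comp tendsto_natCast_atTop_atTop
  have hinner : (fun n : ℕ => log (n + 1 : ℕ) - log n) ~[atTop] fun n => (n : ℝ)⁻¹ := by
    simpa using log_sub_log_isEquivalent (l := atTop) (u := fun n : ℕ => (n : ℝ))
      (v := fun n => (n + 1 : ℕ)) ((eventually_ne_atTop 0).mono fun n hn => Nat.cast_ne_zero.2 hn)
      (by simpa using tendsto_inv_atTop_nhds_zero_nat (𝕜 := ℝ))
  have hratio : (fun n : ℕ => (log (n + 1 : ℕ) - log n) / log n) ~[atTop]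
      fun n => (n * log n)⁻¹ := by
    refine (hinner.div .refl).congr_right (.of_forall fun n => ?_)
    simp only [Pi.div_apply, mul_inv, div_eq_mul_inv]
  have hzero : Tendsto (fun n : ℕ => (n * log n)⁻¹) atTop (𝓝 0) :=
    (tendsto_natCast_atTop_atTop.atTop_mul_atTop₀ hlog_top).inv_tendsto_atTop
  exact (log_sub_log_isEquivalent (hlog_top.eventually_ne_atTop 0)
    (hratio.symm.tendsto_nhds hzero)).trans hratio

theorem tendsto_log_log_natCast_atTop : Tendsto (fun n : ℕ => log (log n)) atTop atTop :=
  Real.tendsto_log_atTop.comp (Real.tendsto_log_atTop.comp tendsto_natCast_atTop_atTop)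

/-- The indicator function of the primes as an arithmetic function; the value at `n` of its `k`-th
Dirichlet power is the number of ordered `k`-tuples of primes with product `n`. -/
def primeIndicator : ArithmeticFunction ℝ :=
  ⟨fun n => if n.Prime then 1 else 0, if_neg Nat.not_prime_zero⟩

theorem primeIndicator_apply (n : ℕ) : primeIndicator n = if n.Prime then 1 else 0 := rfl

theorem sum_Ioc_primeIndicator (N : ℕ) :
    ∑ n ∈ Finset.Ioc 0 N, primeIndicator n = N.primeCounting := by
  simp only [primeIndicator_apply, Finset.sum_boole, Nat.primeCounting, Nat.primeCounting',
    Nat.count_eq_card_filter_range]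
  congr 2
  ext n
  simp only [Finset.mem_filter, Finset.mem_Ioc, Finset.mem_range, Nat.lt_succ_iff]
  exact ⟨fun h => ⟨h.1.2, h.2⟩, fun h => ⟨⟨h.2.pos, h.1⟩, h.2⟩⟩

theorem primeCounting_natCast_isEquivalent :
    (fun n : ℕ => (n.primeCounting : ℝ)) ~[atTop] fun n => n / log n := by
  simpa [Function.comp_def] using
    primeCounting_isEquivalent.comp_tendsto tendsto_natCast_atTop_atTop

theorem primeCounting_div_mul_isEquivalent :
    (fun n : ℕ => (n.primeCounting : ℝ) / (n * (n + 1))) ~[atTop]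
      fun n => log (log (n + 1 : ℕ)) - log (log n) := by
  have hsucc : (fun n : ℕ => (n + 1 : ℝ)) ~[atTop] fun n => (n : ℝ) :=
    IsEquivalent.refl.add_const_of_norm_tendsto_atTop
      (tendsto_norm_atTop_atTop.comp tendsto_natCast_atTop_atTop)
  refine ((primeCounting_natCast_isEquivalent.div (IsEquivalent.refl.mul hsucc)).congr_right
    ?_).trans log_log_add_one_sub_isEquivalent.symm
  filter_upwards [eventually_ne_atTop 0] with n hn
  simp only [Pi.div_apply, Pi.mul_apply]
  field_simp

theorem tendsto_primeCounting_div :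
    Tendsto (fun N : ℕ => (N.primeCounting : ℝ) / N) atTop (𝓝 0) := by
  have hlog : Tendsto (fun N : ℕ => (log N)⁻¹) atTop (𝓝 0) :=
    (Real.tendsto_log_atTop.comp tendsto_natCast_atTop_atTop).inv_tendsto_atTop
  refine ((primeCounting_natCast_isEquivalent.div .refl).congr_right ?_).symm.tendsto_nhds hlog
  filter_upwards [eventually_ne_atTop 0] with N hN
  simp only [Pi.div_apply]
  field_simp

theorem reciprocalSum_primeIndicator_isEquivalent :
    reciprocalSum primeIndicator ~[atTop] fun N => log (log N) := by
  have htelescope (N : ℕ) : ∑ n ∈ Finset.range N, (log (log (n + 1 : ℕ)) - log (log n)) =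
      log (log N) := by
    rw [Finset.sum_range_sub fun n : ℕ => log (log n)]
    simp
  have hpos : ∀ᶠ n : ℕ in atTop, 0 ≤ log (log (n + 1 : ℕ)) - log (log n) := by
    filter_upwards [eventually_gt_atTop 1] with n hn
    have hlog_pos : 0 < log n := Real.log_pos (mod_cast hn)
    rw [sub_nonneg]
    gcongr
    exact n.le_succ
  have hmain := isEquivalent_sum_range primeCounting_div_mul_isEquivalent hpos
    (by simpa only [htelescope] using tendsto_log_log_natCast_atTop)
  simp only [htelescope] at hmain
  have hboundary : (fun N : ℕ => (N.primeCounting : ℝ) / N) =o[atTop] fun N => log (log N) :=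
    (tendsto_primeCounting_div.isBigO_one ℝ).trans_isLittleO
      (isLittleO_const_left.2 (.inr (tendsto_norm_atTop_atTop.comp tendsto_log_log_natCast_atTop)))
  refine (hboundary.add_isEquivalent hmain).congr_left (.of_forall fun N => ?_)
  simp only [Pi.add_apply, reciprocalSum_eq, sum_Ioc_primeIndicator]

end PrimeReciprocals

section Summation

open ArithmeticFunction hiding log
open Real (log)

theorem isEquivalent_of_le_of_le {α : Type*} {l : Filter α} {f g h v : α → ℝ}
    (hf : f ~[l] v) (hh : h ~[l] v) (hfg : f ≤ᶠ[l] g) (hgh : g ≤ᶠ[l] h) : g ~[l] v := by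
  refine IsBigO.trans_isLittleO (IsBigO.of_bound 1 ?_)
    (hf.isLittleO.abs_left.add hh.isLittleO.abs_left)
  filter_upwards [hfg, hgh] with i hfi hhi
  simp only [Pi.sub_apply, Real.norm_eq_abs, one_mul]
  rw [abs_of_nonneg (a := |f i - v i| + |h i - v i|) (by positivity), abs_le]
  constructor <;> linarith [neg_abs_le (f i - v i), le_abs_self (h i - v i),
    abs_nonneg (f i - v i), abs_nonneg (h i - v i)]

theorem tendsto_natSqrt_atTop : Tendsto Nat.sqrt atTop atTop :=
  tendsto_atTop_atTop.2 fun b => ⟨b * b, fun _ h => Nat.le_sqrt.2 h⟩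

theorem log_log_sqrt_isEquivalent :
    (fun N : ℕ => log (log (Nat.sqrt N))) ~[atTop] fun N => log (log N) := by
  have hlower : (fun N : ℕ => log (log N) - log 4) ~[atTop] fun N => log (log N) :=
    IsEquivalent.refl.add_const_of_norm_tendsto_atTop (c := -log 4)
      (tendsto_norm_atTop_atTop.comp tendsto_log_log_natCast_atTop)
  refine isEquivalent_of_le_of_le hlower .refl ?_ ?_
  all_goals
    filter_upwards [tendsto_natSqrt_atTop.eventually_ge_atTop 3, eventually_gt_atTop 1] with N hs hN
    have hlog_sqrt : 0 < log (Nat.sqrt N) := Real.log_pos (by exact_mod_cast (by omega : 1 < _))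
    have hlog : 0 < log N := Real.log_pos (by exact_mod_cast hN)
  · have hpow : N ≤ Nat.sqrt N ^ 4 := by
      have hlt : N < (Nat.sqrt N + 1) * (Nat.sqrt N + 1) := Nat.lt_succ_sqrt N
      nlinarith [Nat.mul_le_mul hs hs, Nat.mul_le_mul_left (Nat.sqrt N ^ 2) (Nat.mul_le_mul hs hs)]
    have hle : log N ≤ 4 * log (Nat.sqrt N) := by
      calc log N ≤ log ((Nat.sqrt N : ℝ) ^ 4) :=
            Real.log_le_log (by positivity) (by exact_mod_cast hpow)
        _ = 4 * log (Nat.sqrt N) := by rw [Real.log_pow]; norm_num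
    rw [sub_le_iff_le_add', ← Real.log_mul (by norm_num) hlog_sqrt.ne']
    exact Real.log_le_log hlog hle
  · gcongr
    exact_mod_cast Nat.sqrt_le_self N

theorem reciprocalSum_mono {f : ℕ → ℝ} (hf : ∀ n, 0 ≤ f n) : Monotone (reciprocalSum f) :=
  fun _ _ h => Finset.sum_le_sum_of_subset_of_nonneg (Finset.Ioc_subset_Ioc_right h)
    fun n _ _ => div_nonneg (hf n) n.cast_nonneg

theorem reciprocalSum_mul_reciprocalSum (f g : ℕ → ℝ) (N : ℕ) :
    reciprocalSum f N * reciprocalSum g N =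
      ∑ x ∈ Finset.Ioc 0 N ×ˢ Finset.Ioc 0 N, f x.1 / x.1 * (g x.2 / x.2) := by
  rw [reciprocalSum, reciprocalSum, Finset.sum_mul_sum, Finset.sum_product]

theorem reciprocalSum_mul (f g : ArithmeticFunction ℝ) (N : ℕ) :
    reciprocalSum (f * g : ArithmeticFunction ℝ) N =
      ∑ x ∈ Finset.Ioc 0 N ×ˢ Finset.Ioc 0 N with x.1 * x.2 ≤ N, f x.1 / x.1 * (g x.2 / x.2) := by
  let divId (h : ArithmeticFunction ℝ) : ArithmeticFunction ℝ := ⟨fun n => h n / n, by simp⟩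
  have hdivId (n : ℕ) : (divId f * divId g) n = (f * g) n / n := by
    rw [mul_apply, mul_apply, Finset.sum_div]
    refine Finset.sum_congr rfl fun x hx => ?_
    rw [← (Nat.mem_divisorsAntidiagonal.1 hx).1, Nat.cast_mul]
    exact div_mul_div_comm ..
  simp only [reciprocalSum, ← hdivId, sum_Ioc_mul_eq_sum_prod_filter]
  rfl

theorem reciprocalSum_mul_le {f g : ArithmeticFunction ℝ} (hf : ∀ n, 0 ≤ f n) (hg : ∀ n, 0 ≤ g n)
    (N : ℕ) : reciprocalSum (f * g : ArithmeticFunction ℝ) N ≤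
      reciprocalSum f N * reciprocalSum g N := by
  rw [reciprocalSum_mul, reciprocalSum_mul_reciprocalSum]
  exact Finset.sum_le_sum_of_subset_of_nonneg (Finset.filter_subset ..) fun x _ _ =>
    mul_nonneg (div_nonneg (hf _) (Nat.cast_nonneg _)) (div_nonneg (hg _) (Nat.cast_nonneg _))

theorem le_reciprocalSum_mul {f g : ArithmeticFunction ℝ} (hf : ∀ n, 0 ≤ f n) (hg : ∀ n, 0 ≤ g n)
    (N : ℕ) : reciprocalSum f (Nat.sqrt N) * reciprocalSum g (Nat.sqrt N) ≤
      reciprocalSum (f * g : ArithmeticFunction ℝ) N := by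
  rw [reciprocalSum_mul, reciprocalSum_mul_reciprocalSum]
  refine Finset.sum_le_sum_of_subset_of_nonneg (fun x hx => ?_) fun x _ _ =>
    mul_nonneg (div_nonneg (hf _) (Nat.cast_nonneg _)) (div_nonneg (hg _) (Nat.cast_nonneg _))
  simp only [Finset.mem_product, Finset.mem_Ioc, Finset.mem_filter] at hx ⊢
  have hsqrt := Nat.sqrt_le_self N
  exact ⟨⟨⟨hx.1.1, hx.1.2.trans hsqrt⟩, hx.2.1, hx.2.2.trans hsqrt⟩,
    (Nat.mul_le_mul hx.1.2 hx.2.2).trans (Nat.sqrt_le N)⟩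

theorem reciprocalSum_mul_isEquivalent {f g : ArithmeticFunction ℝ} (hf : ∀ n, 0 ≤ f n)
    (hg : ∀ n, 0 ≤ g n) {u v : ℕ → ℝ} (hfu : reciprocalSum f ~[atTop] u)
    (hgv : reciprocalSum g ~[atTop] v) (hu : u ∘ Nat.sqrt ~[atTop] u)
    (hv : v ∘ Nat.sqrt ~[atTop] v) :
    reciprocalSum (f * g : ArithmeticFunction ℝ) ~[atTop] u * v :=
  isEquivalent_of_le_of_le
    (((hfu.comp_tendsto tendsto_natSqrt_atTop).trans hu).mul
      ((hgv.comp_tendsto tendsto_natSqrt_atTop).trans hv))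
    (hfu.mul hgv) (.of_forall (le_reciprocalSum_mul hf hg))
    (.of_forall (reciprocalSum_mul_le hf hg))

theorem abs_sum_mul_comp_div_sub_le {w : ℕ → ℝ} {g : ℝ → ℝ} {c : ℝ} {N : ℕ} {s : Finset ℕ}
    (hw : ∀ n, 0 ≤ w n) (hg : ∀ m ∈ s, |g (N / m) - N / m| ≤ c * (N / m)) :
    |∑ m ∈ s, (w m * g (N / m) - N * (w m / m))| ≤ c * N * ∑ m ∈ s, w m / m := by
  rw [Finset.mul_sum]
  refine (Finset.abs_sum_le_sum_abs ..).trans (Finset.sum_le_sum fun m hm => ?_)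
  calc |w m * g (N / m) - N * (w m / m)| = w m * |g (N / m) - N / m| := by
        rw [← abs_of_nonneg (hw m), ← abs_mul, abs_of_nonneg (hw m)]
        ring_nf
    _ ≤ w m * (c * (N / m)) := mul_le_mul_of_nonneg_left (hg m hm) (hw m)
    _ = c * N * (w m / m) := by ring

theorem abs_sum_mul_comp_div_sub_mul_reciprocalSum_le {w : ℕ → ℝ} {g : ℝ → ℝ} {c d : ℝ} {M N : ℕ}
    (hMN : M ≤ N) (hw : ∀ n, 0 ≤ w n)
    (hc : ∀ m ∈ Finset.Ioc 0 M, |g (N / m) - N / m| ≤ c * (N / m))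
    (hd : ∀ m ∈ Finset.Ioc M N, |g (N / m) - N / m| ≤ d * (N / m)) :
    |∑ m ∈ Finset.Ioc 0 N, w m * g (N / m) - N * reciprocalSum w N| ≤
      N * (c * reciprocalSum w M + d * (reciprocalSum w N - reciprocalSum w M)) := by
  have hsplit (f : ℕ → ℝ) : ∑ m ∈ Finset.Ioc 0 N, f m =
      ∑ m ∈ Finset.Ioc 0 M, f m + ∑ m ∈ Finset.Ioc M N, f m :=
    (Finset.sum_Ioc_consecutive f M.zero_le hMN).symm
  have htail : reciprocalSum w N - reciprocalSum w M = ∑ m ∈ Finset.Ioc M N, w m / m := by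
    rw [reciprocalSum, reciprocalSum, hsplit, add_sub_cancel_left]
  calc |∑ m ∈ Finset.Ioc 0 N, w m * g (N / m) - N * reciprocalSum w N|
      = |∑ m ∈ Finset.Ioc 0 M, (w m * g (N / m) - N * (w m / m)) +
          ∑ m ∈ Finset.Ioc M N, (w m * g (N / m) - N * (w m / m))| := by
        rw [reciprocalSum, Finset.mul_sum, ← Finset.sum_sub_distrib, hsplit]
    _ ≤ c * N * reciprocalSum w M + d * N * ∑ m ∈ Finset.Ioc M N, w m / m :=
        (abs_add_le ..).trans (add_le_add (abs_sum_mul_comp_div_sub_le hw hc)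
          (abs_sum_mul_comp_div_sub_le hw hd))
    _ = N * (c * reciprocalSum w M + d * (reciprocalSum w N - reciprocalSum w M)) := by
        rw [htail]
        ring

/- The terms with `m ≤ √N` are handled by `g ~ id`; the others carry a negligible share of the
total weight. -/
theorem sum_mul_comp_div_isEquivalent {w : ℕ → ℝ} {g : ℝ → ℝ} {C : ℝ} (hw : ∀ n, 0 ≤ w n)
    (hsqrt : reciprocalSum w ∘ Nat.sqrt ~[atTop] reciprocalSum w) (hg : g ~[atTop] id)
    (hC : ∀ y, 0 ≤ y → |g y| ≤ C * y) :
    (fun N : ℕ => ∑ m ∈ Finset.Ioc 0 N, w m * g (N / m)) ~[atTop]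
      fun N => N * reciprocalSum w N := by
  have hC0 : 0 ≤ C := by simpa using (abs_nonneg _).trans (hC 1 zero_le_one)
  have hW (N : ℕ) : 0 ≤ reciprocalSum w N :=
    Finset.sum_nonneg fun n _ => div_nonneg (hw n) n.cast_nonneg
  refine isLittleO_iff.2 fun ε hε => ?_
  obtain ⟨δ, hδ, hδε⟩ : ∃ δ > 0, δ + (C + 1) * δ = ε :=
    ⟨ε / (C + 2), by positivity, by field_simp; ring⟩
  obtain ⟨y₀, hy₀⟩ := eventually_atTop.1 (isLittleO_iff.1 hg.isLittleO hδ)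
  filter_upwards [tendsto_natSqrt_atTop.eventually_ge_atTop ⌈y₀⌉₊,
    isLittleO_iff.1 hsqrt.isLittleO hδ] with N hN hslow
  have hsmall : ∀ m ∈ Finset.Ioc 0 N.sqrt, |g (N / m) - N / m| ≤ δ * (N / m) := fun m hm => by
    have hm := Finset.mem_Ioc.1 hm
    have hle : y₀ ≤ N / m := by
      rw [le_div_iff₀ (by exact_mod_cast hm.1)]
      calc y₀ * m ≤ N.sqrt * N.sqrt := by
            gcongr
            · exact (Nat.le_ceil y₀).trans (by exact_mod_cast hN)
            · exact hm.2
        _ ≤ N := by exact_mod_cast N.sqrt_le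
    simpa [abs_of_nonneg (show (0 : ℝ) ≤ N / m by positivity)] using hy₀ _ hle
  have hlarge : ∀ m ∈ Finset.Ioc N.sqrt N, |g (N / m) - N / m| ≤ (C + 1) * (N / m) :=
    fun m _ => by
      have hy : (0 : ℝ) ≤ N / m := by positivity
      linarith [abs_sub (g (N / m)) (N / m), hC _ hy, abs_of_nonneg hy]
  have hhead := reciprocalSum_mono hw N.sqrt_le_self
  have htail : reciprocalSum w N - reciprocalSum w N.sqrt ≤ δ * reciprocalSum w N := by
    rw [Real.norm_of_nonneg (hW N)] at hslow
    exact (le_abs_self _).trans ((abs_sub_comm _ _).trans_le hslow)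
  rw [Real.norm_of_nonneg (r := N * _) (mul_nonneg N.cast_nonneg (hW N)), ← hδε]
  calc _ ≤ N * (δ * reciprocalSum w N.sqrt +
          (C + 1) * (reciprocalSum w N - reciprocalSum w N.sqrt)) :=
        abs_sum_mul_comp_div_sub_mul_reciprocalSum_le N.sqrt_le_self hw hsmall hlarge
    _ ≤ N * (δ * reciprocalSum w N + (C + 1) * (δ * reciprocalSum w N)) := by gcongr
    _ = (δ + (C + 1) * δ) * (N * reciprocalSum w N) := by ring

theorem log_factorial (N : ℕ) : log N.factorial = ∑ n ∈ Finset.Ioc 0 N, log n := by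
  induction N with
  | zero => simp
  | succ N ih =>
    rw [Nat.factorial_succ, Nat.cast_mul, Real.log_mul (by positivity) (by positivity), ih,
      Finset.sum_Ioc_succ_top N.zero_le, add_comm]

theorem mul_log_sub_sum_log_le (N : ℕ) :
    N * log N - ∑ n ∈ Finset.Ioc 0 N, log n ≤ N := by
  rcases eq_or_ne N 0 with rfl | hN
  · simp
  have hlog : 0 ≤ log N := Real.log_natCast_nonneg N
  have hlog_pi : 0 ≤ log (2 * Real.pi) := Real.log_nonneg (by linarith [Real.pi_gt_three])
  linarith [Stirling.le_log_factorial_stirling hN, log_factorial N]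

theorem abs_sum_mul_log_sub_le {a : ℕ → ℝ} {C : ℝ} (ha : ∀ n, 0 ≤ a n) (haC : ∀ n, a n ≤ C)
    (N : ℕ) :
    |∑ n ∈ Finset.Ioc 0 N, a n * log n - (∑ n ∈ Finset.Ioc 0 N, a n) * log N| ≤ C * N := by
  have hdiff : ∀ n ∈ Finset.Ioc 0 N, 0 ≤ log N - log n := fun n hn => by
    have hn := Finset.mem_Ioc.1 hn
    exact sub_nonneg.2 (Real.log_le_log (by exact_mod_cast hn.1) (by exact_mod_cast hn.2))
  have hC : 0 ≤ C := (ha 0).trans (haC 0)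
  rw [abs_sub_comm, Finset.sum_mul, ← Finset.sum_sub_distrib]
  simp only [← mul_sub]
  rw [abs_of_nonneg (Finset.sum_nonneg fun n hn => mul_nonneg (ha n) (hdiff n hn))]
  calc ∑ n ∈ Finset.Ioc 0 N, a n * (log N - log n)
      ≤ ∑ n ∈ Finset.Ioc 0 N, C * (log N - log n) :=
        Finset.sum_le_sum fun n hn => mul_le_mul_of_nonneg_right (haC n) (hdiff n hn)
    _ = C * (N * log N - ∑ n ∈ Finset.Ioc 0 N, log n) := by
        rw [← Finset.mul_sum, Finset.sum_sub_distrib]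
        simp
    _ ≤ C * N := mul_le_mul_of_nonneg_left (mul_log_sub_sum_log_le N) hC

theorem isEquivalent_sum_of_sum_mul_log {a : ℕ → ℝ} {C : ℝ} {g : ℕ → ℝ} (ha : ∀ n, 0 ≤ a n)
    (haC : ∀ n, a n ≤ C) (hg : Tendsto g atTop atTop)
    (h : (fun N => ∑ n ∈ Finset.Ioc 0 N, a n * log n) ~[atTop] fun N => N * g N) :
    (fun N => ∑ n ∈ Finset.Ioc 0 N, a n) ~[atTop] fun N => N * g N / log N := by
  have herror : (fun N : ℕ => (N : ℝ)) =o[atTop] fun N => N * g N := by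
    simpa using (isBigO_refl (fun N : ℕ => (N : ℝ)) atTop).mul_isLittleO
      ((isLittleO_const_left (c := (1 : ℝ))).2 (.inr (tendsto_norm_atTop_atTop.comp hg)))
  have hmul : (fun N => (∑ n ∈ Finset.Ioc 0 N, a n) * log N) ~[atTop] fun N => N * g N := by
    refine (h.sub_isLittleO (IsBigO.trans_isLittleO (.of_bound C (.of_forall fun N => ?_))
      herror)).congr_left (.of_forall fun N => sub_sub_cancel _ _)
    simpa using abs_sum_mul_log_sub_le ha haC N
  refine (hmul.div .refl).congr_left ?_
  filter_upwards [eventually_gt_atTop 1] with N hN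
  have hlog : log N ≠ 0 := (Real.log_pos (by exact_mod_cast hN)).ne'
  exact mul_div_cancel_right₀ _ hlog

end Summation

section PrimePowers

open ArithmeticFunction hiding log
open Real (log)
open scoped ArithmeticFunction.Omega

theorem mul_pmul_log (f g : ArithmeticFunction ℝ) :
    (f * g).pmul ArithmeticFunction.log =
      f * g.pmul ArithmeticFunction.log + g * f.pmul ArithmeticFunction.log := by
  ext n
  rw [mul_comm g, ArithmeticFunction.add_apply, pmul_apply, mul_apply, mul_apply, mul_apply,
    Finset.sum_mul, ← Finset.sum_add_distrib]
  refine Finset.sum_congr rfl fun x hx => ?_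
  obtain ⟨rfl, hn⟩ := Nat.mem_divisorsAntidiagonal.1 hx
  obtain ⟨hx₁, hx₂⟩ := mul_ne_zero_iff.1 hn
  simp only [pmul_apply, log_apply]
  rw [Nat.cast_mul, Real.log_mul (Nat.cast_ne_zero.2 hx₁) (Nat.cast_ne_zero.2 hx₂)]
  ring

theorem pow_succ_pmul_log (f : ArithmeticFunction ℝ) (k : ℕ) :
    (f ^ (k + 1)).pmul ArithmeticFunction.log =
      (k + 1 : ℝ) • (f ^ k * f.pmul ArithmeticFunction.log) := by
  induction k with
  | zero => simp
  | succ k ih =>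
    rw [pow_succ f (k + 1), mul_pmul_log, ih, mul_smul_comm, ← mul_assoc, ← pow_succ']
    push_cast
    module

theorem sum_primeIndicator_pmul_log (N m : ℕ) :
    ∑ n ∈ Finset.Ioc 0 (N / m), primeIndicator.pmul ArithmeticFunction.log n =
      Chebyshev.theta (N / m) := by
  rw [Chebyshev.theta, Nat.floor_div_natCast, Nat.floor_natCast, Finset.sum_filter]
  refine Finset.sum_congr rfl fun n _ => ?_
  rw [pmul_apply, log_apply, primeIndicator_apply, ite_mul, one_mul, zero_mul]

theorem sum_primeIndicator_pow_mul_log (k N : ℕ) :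
    ∑ n ∈ Finset.Ioc 0 N, (primeIndicator ^ (k + 1)) n * log n =
      (k + 1) * ∑ m ∈ Finset.Ioc 0 N, (primeIndicator ^ k) m * Chebyshev.theta (N / m) := by
  simp only [← sum_primeIndicator_pmul_log, ← sum_Ioc_mul_eq_sum_sum]
  rw [Finset.mul_sum]
  exact Finset.sum_congr rfl fun n _ => DFunLike.congr_fun (pow_succ_pmul_log primeIndicator k) n

theorem primeIndicator_pow_succ_apply (k n : ℕ) :
    (primeIndicator ^ (k + 1)) n = ∑ p ∈ n.primeFactors, (primeIndicator ^ k) (n / p) := by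
  rw [pow_succ', mul_apply, Nat.sum_divisorsAntidiagonal
    (f := fun p m => primeIndicator p * (primeIndicator ^ k) m),
    Nat.primeFactors_eq_to_filter_divisors_prime, Finset.sum_filter]
  simp only [primeIndicator_apply, ite_mul, one_mul, zero_mul]

theorem primeIndicator_pow_nonneg (k n : ℕ) : 0 ≤ (primeIndicator ^ k) n := by
  induction k generalizing n with
  | zero => rw [pow_zero, one_apply]; positivity
  | succ k ih =>
    rw [primeIndicator_pow_succ_apply]
    exact Finset.sum_nonneg fun p _ => ih _

theorem cardFactors_div_add_one {n p : ℕ} (hp : p ∈ n.primeFactors) : Ω (n / p) + 1 = Ω n := by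
  obtain ⟨hprime, ⟨m, rfl⟩, hn⟩ := Nat.mem_primeFactors.1 hp
  rw [mul_ne_zero_iff] at hn
  rw [Nat.mul_div_cancel_left m hprime.pos, cardFactors_mul hn.1 hn.2,
    cardFactors_apply_prime hprime, add_comm]

theorem card_primeFactors_le_cardFactors (n : ℕ) : n.primeFactors.card ≤ Ω n :=
  List.toFinset_card_le _

theorem primeIndicator_pow_eq_zero {k n : ℕ} (h : Ω n ≠ k) : (primeIndicator ^ k) n = 0 := by
  induction k generalizing n with
  | zero =>
    rw [pow_zero, one_apply_ne]
    rintro rfl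
    exact h cardFactors_one
  | succ k ih =>
    rw [primeIndicator_pow_succ_apply]
    refine Finset.sum_eq_zero fun p hp => ih fun h' => h ?_
    rw [← cardFactors_div_add_one hp, h']

theorem primeIndicator_pow_le (k n : ℕ) : (primeIndicator ^ k) n ≤ k.factorial := by
  induction k generalizing n with
  | zero =>
    rw [pow_zero, one_apply]
    split_ifs <;> simp
  | succ k ih =>
    by_cases hn : Ω n = k + 1
    · calc (primeIndicator ^ (k + 1)) n ≤ n.primeFactors.card * k.factorial := by
            rw [primeIndicator_pow_succ_apply, ← nsmul_eq_mul]
            exact Finset.sum_le_card_nsmul _ _ _ fun p _ => ih _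
        _ ≤ (k + 1).factorial := by
            rw [Nat.factorial_succ, ← hn]
            exact_mod_cast Nat.mul_le_mul_right _ (card_primeFactors_le_cardFactors n)
    · rw [primeIndicator_pow_eq_zero hn]
      positivity

theorem primeIndicator_pow_of_squarefree {k n : ℕ} (hn : Squarefree n) (h : Ω n = k) :
    (primeIndicator ^ k) n = k.factorial := by
  induction k generalizing n with
  | zero =>
    obtain rfl | rfl := cardFactors_eq_zero_iff_eq_zero_or_one.1 h
    · exact absurd hn not_squarefree_zero
    · simp
  | succ k ih =>
    have hdiv : ∀ p ∈ n.primeFactors, (primeIndicator ^ k) (n / p) = k.factorial := fun p hp =>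
      ih (hn.squarefree_of_dvd (Nat.div_dvd_of_dvd (Nat.dvd_of_mem_primeFactors hp)))
        (by have := cardFactors_div_add_one hp; omega)
    have hcard : n.primeFactors.card = Ω n :=
      (cardDistinctFactors_eq_cardFactors_iff_squarefree hn.ne_zero).2 hn
    rw [primeIndicator_pow_succ_apply, Finset.sum_congr rfl hdiv, Finset.sum_const, hcard, h,
      nsmul_eq_mul, Nat.factorial_succ, Nat.cast_mul]

theorem reciprocalSum_primeIndicator_pow_isEquivalent (k : ℕ) :
    reciprocalSum ⇑(primeIndicator ^ k) ~[atTop] fun N => log (log N) ^ k := by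
  have hsqrt (j : ℕ) : (fun N : ℕ => log (log N) ^ j) ∘ Nat.sqrt ~[atTop]
      fun N => log (log N) ^ j := log_log_sqrt_isEquivalent.pow j
  have hprime : reciprocalSum primeIndicator ~[atTop] fun N => log (log N) ^ 1 := by
    simpa using reciprocalSum_primeIndicator_isEquivalent
  induction k with
  | zero =>
    refine IsEquivalent.refl.congr_left ?_
    filter_upwards [eventually_ge_atTop 1] with N hN
    rw [reciprocalSum, Finset.sum_eq_single_of_mem 1 (Finset.mem_Ioc.2 ⟨one_pos, hN⟩)
      fun n _ hn => by rw [pow_zero, one_apply_ne hn, zero_div]]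
    simp
  | succ k ih =>
    rw [pow_succ]
    refine (reciprocalSum_mul_isEquivalent (primeIndicator_pow_nonneg k) ?_ ih hprime (hsqrt k)
      (hsqrt 1)).congr_right (.of_forall fun N => ?_)
    · simpa using primeIndicator_pow_nonneg 1
    · simp [pow_succ]

theorem sum_primeIndicator_pow_isEquivalent (k : ℕ) :
    (fun N => ∑ n ∈ Finset.Ioc 0 N, (primeIndicator ^ (k + 1)) n) ~[atTop]
      fun N => (k + 1) * (N * log (log N) ^ k / log N) := by
  rcases k.eq_zero_or_pos with rfl | hk
  · simpa [sum_Ioc_primeIndicator] using primeCounting_natCast_isEquivalent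
  have hreciprocal := reciprocalSum_primeIndicator_pow_isEquivalent k
  have hsqrt : reciprocalSum ⇑(primeIndicator ^ k) ∘ Nat.sqrt ~[atTop]
      reciprocalSum ⇑(primeIndicator ^ k) :=
    ((hreciprocal.comp_tendsto tendsto_natSqrt_atTop).trans (log_log_sqrt_isEquivalent.pow k)).trans
      hreciprocal.symm
  have htheta (y : ℝ) (hy : 0 ≤ y) : |Chebyshev.theta y| ≤ log 4 * y := by
    rw [abs_of_nonneg (Chebyshev.theta_nonneg y)]
    exact Chebyshev.theta_le_log4_mul_x hy
  have hlog : (fun N => ∑ n ∈ Finset.Ioc 0 N, (primeIndicator ^ (k + 1)) n * log n) ~[atTop]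
      fun N => N * ((k + 1) * log (log N) ^ k) := by
    simp only [sum_primeIndicator_pow_mul_log]
    have hconv := (sum_mul_comp_div_isEquivalent (primeIndicator_pow_nonneg k) hsqrt
      theta_isEquivalent htheta).trans (IsEquivalent.refl.mul hreciprocal)
    refine (IsEquivalent.refl.mul hconv).congr_right (.of_forall fun N => ?_)
    simp only [Pi.mul_apply]
    ring
  have htop : Tendsto (fun N : ℕ => (k + 1) * log (log N) ^ k) atTop atTop :=
    ((tendsto_pow_atTop hk.ne').comp tendsto_log_log_natCast_atTop).const_mul_atTop (by positivity)
  refine (isEquivalent_sum_of_sum_mul_log (primeIndicator_pow_nonneg _) (primeIndicator_pow_le _)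
    htop hlog).congr_right (.of_forall fun N => ?_)
  ring

end PrimePowers

section AlmostPrimes

open ArithmeticFunction hiding log
open Real (log)
open scoped ArithmeticFunction.Omega

/-- The `k`-almost primes in `[1, N]`, prime factors being counted with multiplicity; the number of
its elements is the counting function `τ_k(N)`. -/
def almostPrimes (k N : ℕ) : Finset ℕ := {n ∈ Finset.Ioc 0 N | Ω n = k}

theorem mem_almostPrimes {k N n : ℕ} : n ∈ almostPrimes k N ↔ (0 < n ∧ n ≤ N) ∧ Ω n = k := by
  rw [almostPrimes, Finset.mem_filter, Finset.mem_Ioc]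

theorem card_filter_not_squarefree_almostPrimes_le (k N : ℕ) :
    ((almostPrimes (k + 1) N).filter fun n => ¬Squarefree n).card ≤
      k * (almostPrimes k N).card := by
  have hsubset : ((almostPrimes (k + 1) N).filter fun n => ¬Squarefree n) ⊆
      (almostPrimes k N).biUnion fun m => m.primeFactors.image (m * ·) := fun n hn => by
    simp only [Finset.mem_filter, mem_almostPrimes] at hn
    obtain ⟨⟨⟨hpos, hle⟩, hΩ⟩, hsq⟩ := hn
    obtain ⟨p, hp, m, rfl⟩ : ∃ p, p.Prime ∧ p * p ∣ n := by
      simpa [Nat.squarefree_iff_prime_squarefree] using hsq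
    have hmem : p ∈ (p * p * m).primeFactors :=
      Nat.mem_primeFactors.2 ⟨hp, dvd_mul_of_dvd_left (dvd_mul_right p p) m, hpos.ne'⟩
    have hdiv : p * p * m / p = p * m := by rw [mul_assoc, Nat.mul_div_cancel_left _ hp.pos]
    have hΩ_div := cardFactors_div_add_one hmem
    rw [hdiv] at hΩ_div
    simp only [Finset.mem_biUnion, Finset.mem_image, mem_almostPrimes]
    have hpm : 0 < p * m := Nat.pos_of_mul_pos_left (by rwa [mul_assoc] at hpos)
    exact ⟨p * m, ⟨⟨hpm, le_trans (by nlinarith [hp.pos]) hle⟩, by omega⟩, p,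
      Nat.mem_primeFactors.2 ⟨hp, dvd_mul_right p m, hpm.ne'⟩, by ring⟩
  refine (Finset.card_le_card hsubset).trans ?_
  rw [mul_comm]
  refine Finset.card_biUnion_le_card_mul _ _ _ fun m hm => Finset.card_image_le.trans ?_
  exact (card_primeFactors_le_cardFactors m).trans_eq (mem_almostPrimes.1 hm).2

theorem sum_almostPrimes_primeIndicator_pow (k N : ℕ) :
    ∑ n ∈ almostPrimes k N, (primeIndicator ^ k) n =
      ∑ n ∈ Finset.Ioc 0 N, (primeIndicator ^ k) n := by
  rw [almostPrimes, Finset.sum_filter_of_ne]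
  exact fun n _ => not_imp_comm.1 primeIndicator_pow_eq_zero

theorem sum_primeIndicator_pow_le (k N : ℕ) :
    ∑ n ∈ Finset.Ioc 0 N, (primeIndicator ^ k) n ≤ k.factorial * (almostPrimes k N).card := by
  rw [← sum_almostPrimes_primeIndicator_pow, mul_comm, ← nsmul_eq_mul]
  exact Finset.sum_le_card_nsmul _ _ _ fun n _ => primeIndicator_pow_le k n

theorem factorial_mul_card_almostPrimes_sub_le (k N : ℕ) :
    ((k + 1).factorial * (almostPrimes (k + 1) N).card : ℝ) -
      ∑ n ∈ Finset.Ioc 0 N, (primeIndicator ^ (k + 1)) n ≤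
        (k + 1).factorial * (k * (almostPrimes k N).card) := by
  have hterm : ∀ n ∈ almostPrimes (k + 1) N,
      ((k + 1).factorial : ℝ) - (primeIndicator ^ (k + 1)) n ≤
        if ¬Squarefree n then ((k + 1).factorial : ℝ) else 0 := fun n hn => by
    split_ifs with hsq
    · rw [primeIndicator_pow_of_squarefree hsq (mem_almostPrimes.1 hn).2, sub_self]
    · exact sub_le_self _ (primeIndicator_pow_nonneg _ _)
  calc ((k + 1).factorial * (almostPrimes (k + 1) N).card : ℝ) -
        ∑ n ∈ Finset.Ioc 0 N, (primeIndicator ^ (k + 1)) n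
      = ∑ n ∈ almostPrimes (k + 1) N,
          (((k + 1).factorial : ℝ) - (primeIndicator ^ (k + 1)) n) := by
        rw [Finset.sum_sub_distrib, sum_almostPrimes_primeIndicator_pow, Finset.sum_const,
          nsmul_eq_mul, mul_comm]
    _ ≤ ∑ n ∈ almostPrimes (k + 1) N, if ¬Squarefree n then ((k + 1).factorial : ℝ) else 0 :=
        Finset.sum_le_sum hterm
    _ = (k + 1).factorial * ((almostPrimes (k + 1) N).filter fun n => ¬Squarefree n).card := by
        rw [← Finset.sum_filter, Finset.sum_const, nsmul_eq_mul, mul_comm]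
    _ ≤ (k + 1).factorial * (k * (almostPrimes k N).card) := by
        gcongr
        exact_mod_cast card_filter_not_squarefree_almostPrimes_le k N

/-- The main term `N (log log N)^k / (k! log N)` in Landau's theorem for `(k + 1)`-almost primes. -/
noncomputable def landauMainTerm (k N : ℕ) : ℝ :=
  N * log (log N) ^ k / (k.factorial * log N)

theorem landauMainTerm_isLittleO (k : ℕ) :
    landauMainTerm k =o[atTop] landauMainTerm (k + 1) := by
  have hsucc (N : ℕ) : landauMainTerm (k + 1) N =
      landauMainTerm k N * ((k + 1 : ℝ)⁻¹ * log (log N)) := by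
    simp only [landauMainTerm, Nat.factorial_succ]
    push_cast
    simp only [div_eq_mul_inv, mul_inv]
    ring
  have htop : Tendsto (fun N : ℕ => (k + 1 : ℝ)⁻¹ * log (log N)) atTop atTop :=
    tendsto_log_log_natCast_atTop.const_mul_atTop (by positivity)
  have hone := (isLittleO_const_left (c := (1 : ℝ))).2 (.inr (tendsto_norm_atTop_atTop.comp htop))
  exact ((isBigO_refl (landauMainTerm k) atTop).mul_isLittleO hone).congr
    (fun N => mul_one _) fun N => (hsucc N).symm

theorem card_almostPrimes_isEquivalent (k : ℕ) :
    (fun N => ((almostPrimes (k + 1) N).card : ℝ)) ~[atTop] landauMainTerm k := by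
  have hmain : (fun N => (∑ n ∈ Finset.Ioc 0 N, (primeIndicator ^ (k + 1)) n) /
      (k + 1).factorial) ~[atTop] landauMainTerm k := by
    refine ((sum_primeIndicator_pow_isEquivalent k).div .refl).congr_right (.of_forall fun N => ?_)
    simp only [Pi.div_apply, landauMainTerm, Nat.factorial_succ]
    push_cast
    field_simp
  have herror : (fun N => (k * (almostPrimes k N).card : ℝ)) =o[atTop] landauMainTerm k := by
    cases k with
    | zero => simp
    | succ k =>
      exact ((card_almostPrimes_isEquivalent k).isBigO.trans_isLittleO
        (landauMainTerm_isLittleO k)).const_mul_left _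
  have hfactorial : (0 : ℝ) < (k + 1).factorial := by positivity
  refine isEquivalent_of_le_of_le hmain (hmain.add_isLittleO herror)
    (.of_forall fun N => ?_) (.of_forall fun N => ?_)
  · simp only
    rw [div_le_iff₀' hfactorial]
    exact sum_primeIndicator_pow_le (k + 1) N
  · simp only [Pi.add_apply]
    rw [div_add' _ _ _ hfactorial.ne', le_div_iff₀' hfactorial, ← sub_le_iff_le_add']
    exact (factorial_mul_card_almostPrimes_sub_le k N).trans_eq (mul_comm _ _)

theorem filter_range_primeFactorsList_length_eq {k : ℕ} (hk : k ≠ 0) (N : ℕ) :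
    (Finset.range (N + 1)).filter (fun n => n.primeFactorsList.length = k) = almostPrimes k N := by
  ext n
  have hpos (h : n.primeFactorsList.length = k) : 0 < n := by
    rcases n.eq_zero_or_pos with rfl | hn
    · simp [hk.symm] at h
    · exact hn
  simp only [Finset.mem_filter, Finset.mem_range, Nat.lt_succ_iff, mem_almostPrimes,
    cardFactors_apply]
  exact ⟨fun h => ⟨⟨hpos h.2, h.1⟩, h.2⟩, fun h => ⟨h.1.2, h.2⟩⟩

end AlmostPrimes

end Landau

theorem stmt_5 (k : ℕ) (hk : 1 ≤ k) :
    IsEquivalent atTop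
      (fun x : ℕ => (((Finset.range (x + 1)).filter
          (fun n => n.primeFactorsList.length = k)).card : ℝ))
      (fun x : ℕ => x * (Real.log (Real.log x)) ^ (k - 1) /
          ((k - 1).factorial * Real.log x)) := by
  obtain ⟨k, rfl⟩ := Nat.exists_eq_add_of_le' hk
  simp only [Landau.filter_range_primeFactorsList_length_eq k.succ_ne_zero, Nat.add_sub_cancel]
  exact Landau.card_almostPrimes_isEquivalent k
end

section
/- Fix N ≥ 1, k ≥ 2, and a k-tuple (m₁,…,m_k) of units modulo N. Let π_{k,m}(x) be the number of squarefree n ≤ x with n = p₁p₂⋯p_k, p₁ < p₂ < … < p_k primes, such that p_i ≡ m_i (mod N) for each i. Then π_{k,m}(x) ~ (1/φ(N)^k) · x (log log x)^{k-1} / ((k-1)! log x) as x → ∞. -/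
open Filter Asymptotics
open scoped Classical

/-!
Wiener and Ikehara's theorem, proved by integrating against the Fejér kernel, turns the regularity
of the logarithmic derivatives of Dirichlet `L`-functions on `Re s = 1` into the prime number
theorem for residue classes. For sets of primes `S i` of relative density `c i`, partial summation
gives `∑ 1 / p ~ c i * log log x` over `p ∈ S i`, and summing over the largest factor first,
induction on `k` shows that the reciprocals of the products `p₁ ⋯ pₖ` with `p₁ < ⋯ < pₖ < x` and
`pᵢ ∈ S i` add up to `∏ c i * (log log x) ^ k / k!` asymptotically.

The products `P * p ≤ x` with largest factor `p` are counted by their cofactor `P`. If `P` is at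
most a fixed power of `w = x ^ (1 / log log x)`, then `log (x / P) ~ log x`, so `P` contributes
`c * (x / log x) / P`; since `log log w ~ log log x`, these cofactors already carry almost all of
the sum of the `1 / P`. The remaining ones are negligible, because `P * p ≤ x` forces
`x ≤ (x / P) ^ k`, which bounds the contribution of each by a multiple of `(x / log x) / P`.
-/

open MeasureTheory Set Topology
open scoped Nat Finset

section FejerKernel

/-- The Fejér kernel, scaled so that its Fourier transform is the triangle function `1 - |t|` on
`[-1, 1]`. Division by zero gives it the value `0` at `x = 0`, where the continuous extension would
be `1`. -/
noncomputable def fejerKernel (x : ℝ) : ℝ := 2 * (1 - Real.cos x) / x ^ 2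

lemma fejerKernel_nonneg (x : ℝ) : 0 ≤ fejerKernel x :=
  div_nonneg (by linarith [Real.cos_le_one x]) (sq_nonneg x)

lemma fejerKernel_le_one (x : ℝ) : fejerKernel x ≤ 1 :=
  div_le_one_of_le₀ (by linarith [Real.one_sub_sq_div_two_le_cos (x := x)]) (sq_nonneg x)

lemma fejerKernel_le_inv_one_add_sq (x : ℝ) : fejerKernel x ≤ 5 * (1 + x ^ 2)⁻¹ := by
  have hpos : 0 < 1 + x ^ 2 := by positivity
  rw [← div_eq_mul_inv]
  obtain h | h := le_or_gt (x ^ 2) 4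
  · refine (fejerKernel_le_one x).trans ?_
    rw [le_div_iff₀ hpos]
    linarith
  · rw [fejerKernel, div_le_div_iff₀ (by linarith) hpos]
    nlinarith [Real.neg_one_le_cos x]

@[fun_prop]
lemma measurable_fejerKernel : Measurable fejerKernel := by
  unfold fejerKernel
  fun_prop

lemma integrable_fejerKernel : Integrable fejerKernel := by
  refine (integrable_inv_one_add_sq.const_mul 5).mono'
    measurable_fejerKernel.aestronglyMeasurable (.of_forall fun x => ?_)
  rw [Real.norm_of_nonneg (fejerKernel_nonneg x)]
  exact fejerKernel_le_inv_one_add_sq x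

lemma integral_fejerKernel_pos : 0 < ∫ x, fejerKernel x := by
  rw [integral_pos_iff_support_of_nonneg fejerKernel_nonneg integrable_fejerKernel]
  have hsupport : Ioo (0 : ℝ) 1 ⊆ Function.support fejerKernel := by
    intro x hx
    have hcos : Real.cos x < 1 := by
      simpa using Real.cos_lt_cos_of_nonneg_of_le_pi_div_two le_rfl
        (by linarith [Real.pi_gt_three, hx.2] : x ≤ Real.pi / 2) hx.1
    exact (div_pos (by linarith) (pow_pos hx.1 2)).ne'
  exact lt_of_lt_of_le (by simp) (measure_mono hsupport)

lemma integral_one_sub_mul_cos {x : ℝ} (hx : x ≠ 0) :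
    ∫ t in (0 : ℝ)..1, (1 - t) * Real.cos (x * t) = (1 - Real.cos x) / x ^ 2 := by
  have hderiv : ∀ t ∈ uIcc (0 : ℝ) 1, HasDerivAt
      (fun t => (1 - t) * Real.sin (x * t) / x - Real.cos (x * t) / x ^ 2)
      ((1 - t) * Real.cos (x * t)) t := by
    intro t _
    have hmul : HasDerivAt (fun t => x * t) x t := by simpa using (hasDerivAt_id t).const_mul x
    have hsub : HasDerivAt (fun t : ℝ => 1 - t) (-1) t := by
      simpa using (hasDerivAt_id t).const_sub 1
    refine (((hsub.mul hmul.sin).div_const x).sub (hmul.cos.div_const (x ^ 2))).congr_deriv ?_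
    field_simp
    ring
  rw [intervalIntegral.integral_eq_sub_of_hasDerivAt hderiv
    (Continuous.intervalIntegrable (by fun_prop) _ _)]
  simp only [sub_self, zero_mul, zero_div, mul_one, zero_sub, sub_zero, mul_zero, Real.sin_zero,
    Real.cos_zero]
  ring

lemma integral_triangle_mul_exp {x : ℝ} (hx : x ≠ 0) :
    ∫ t in Icc (-1 : ℝ) 1, ((1 - |t| : ℝ) : ℂ) * Complex.exp (Complex.I * (x * t)) =
      fejerKernel x := by
  set g : ℝ → ℂ := fun t => ((1 - |t| : ℝ) : ℂ) * Complex.exp (Complex.I * (x * t)) with hg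
  have hcont : Continuous g := by fun_prop
  have hcont_neg : Continuous fun t => g (-t) := hcont.comp continuous_neg
  have hfold : ∫ t in (-1 : ℝ)..0, g t = ∫ t in (0 : ℝ)..1, g (-t) := by
    simp
  have hcos : ∀ t ∈ uIcc (0 : ℝ) 1,
      g (-t) + g t = ((2 * ((1 - t) * Real.cos (x * t)) : ℝ) : ℂ) := by
    intro t ht
    rw [uIcc_of_le zero_le_one] at ht
    simp only [hg, abs_neg, abs_of_nonneg ht.1]
    push_cast
    rw [Complex.cos, mul_comm (x * t : ℂ) Complex.I, neg_mul, mul_comm (x * t : ℂ) Complex.I,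
      mul_neg, mul_neg]
    ring
  rw [integral_Icc_eq_integral_Ioc, ← intervalIntegral.integral_of_le (by norm_num),
    ← intervalIntegral.integral_add_adjacent_intervals (b := 0)
      (hcont.intervalIntegrable _ _) (hcont.intervalIntegrable _ _),
    hfold, ← intervalIntegral.integral_add
      (hcont_neg.intervalIntegrable _ _) (hcont.intervalIntegrable _ _),
    intervalIntegral.integral_congr hcos, intervalIntegral.integral_ofReal,
    intervalIntegral.integral_const_mul, integral_one_sub_mul_cos hx, fejerKernel, mul_div_assoc]

end FejerKernel

section LaplaceTransform

variable {D : ℝ → ℝ} {M : ℝ} {G : ℂ → ℂ}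

lemma integrable_triangle_mul_exp_mul (hD : Measurable D) (hDM : ∀ u, |D u| ≤ M)
    {ε : ℝ} (hε : 0 < ε) (l y : ℝ) :
    Integrable (Function.uncurry fun u t : ℝ =>
        ((1 - |t| : ℝ) : ℂ) * Complex.exp (Complex.I * (l * y * t)) *
          ((D u : ℂ) * Complex.exp (-((ε : ℂ) + Complex.I * (l * t)) * u)))
      ((volume.restrict (Ioi (0 : ℝ))).prod (volume.restrict (Icc (-1 : ℝ) 1))) := by
  have hbound : Integrable (fun u : ℝ => M * Real.exp (-ε * u)) (volume.restrict (Ioi 0)) :=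
    (exp_neg_integrableOn_Ioi 0 hε).const_mul M
  refine (hbound.mul_prod (integrable_const 1)).mono' (Measurable.aestronglyMeasurable ?_) ?_
  · simp only [Function.uncurry_def]
    fun_prop
  rw [Measure.prod_restrict]
  refine (ae_restrict_iff' (measurableSet_Ioi.prod measurableSet_Icc)).2
    (.of_forall fun ⟨u, t⟩ ⟨_, ht⟩ => ?_)
  have htriangle : ‖1 - |t|‖ ≤ 1 := by
    rw [Real.norm_eq_abs, abs_le]
    constructor <;> linarith [abs_nonneg t, abs_le.2 ht]
  have hexp : ‖Complex.exp (-((ε : ℂ) + Complex.I * (l * t)) * u)‖ = Real.exp (-ε * u) := by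
    simp [Complex.norm_exp]
  have hunit : ‖Complex.exp (Complex.I * (l * y * t))‖ = 1 := by simp [Complex.norm_exp]
  rw [Function.uncurry_apply_pair, norm_mul, norm_mul, norm_mul, hexp, hunit, Complex.norm_real,
    Complex.norm_real, mul_one, mul_one]
  exact (mul_le_mul htriangle (mul_le_mul_of_nonneg_right (hDM u) (Real.exp_nonneg _))
    (by positivity) zero_le_one).trans_eq (one_mul _)

/-- The Fourier formula for the Fejér kernel is integrated against `D`; the factor `exp (-ε u)`
makes Fubini's theorem applicable. -/
lemma integral_mul_exp_mul_fejerKernel (hD : Measurable D) (hDM : ∀ u, |D u| ≤ M)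
    {ε l : ℝ} (hε : 0 < ε) (hl : l ≠ 0) (y : ℝ) :
    ((∫ u in Ioi (0 : ℝ), D u * Real.exp (-ε * u) * fejerKernel (l * (y - u)) : ℝ) : ℂ) =
      ∫ t in Icc (-1 : ℝ) 1, ((1 - |t| : ℝ) : ℂ) * Complex.exp (Complex.I * (l * y * t)) *
        ∫ u in Ioi (0 : ℝ), (D u : ℂ) * Complex.exp (-((ε : ℂ) + Complex.I * (l * t)) * u) := by
  have hswap := integral_integral_swap (integrable_triangle_mul_exp_mul hD hDM hε l y)
  simp only [integral_const_mul] at hswap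
  rw [← hswap, ← integral_complex_ofReal]
  refine setIntegral_congr_ae measurableSet_Ioi ?_
  have hne_ae : ∀ᵐ u : ℝ, u ≠ y := by simp [ae_iff]
  filter_upwards [hne_ae] with u hu _
  have hfourier := integral_triangle_mul_exp (mul_ne_zero hl (sub_ne_zero.2 hu.symm))
  push_cast at hfourier ⊢
  rw [← hfourier, ← integral_const_mul]
  refine integral_congr_ae (.of_forall fun t => ?_)
  have hexp : Complex.exp (Complex.I * (l * y * t)) *
      Complex.exp (-((ε : ℂ) + Complex.I * (l * t)) * u) =
        Complex.exp (-ε * u) * Complex.exp (Complex.I * (l * (y - u) * t)) := by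
    rw [← Complex.exp_add, ← Complex.exp_add]
    ring_nf
  linear_combination (-(D u : ℂ) * (1 - (|t| : ℝ))) * hexp

lemma integrable_fejerKernel_comp_mul_sub {l : ℝ} (hl : l ≠ 0) (y : ℝ) :
    Integrable (fun u => fejerKernel (l * (y - u))) :=
  (integrable_fejerKernel.comp_mul_left' hl).comp_sub_left y

lemma tendsto_integral_mul_exp_mul_fejerKernel (hD : Measurable D) (hDM : ∀ u, |D u| ≤ M)
    {l : ℝ} (hl : l ≠ 0) (y : ℝ) :
    Tendsto (fun ε : ℝ =>
        ∫ u in Ioi (0 : ℝ), D u * Real.exp (-ε * u) * fejerKernel (l * (y - u)))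
      (𝓝[>] 0) (𝓝 (∫ u in Ioi (0 : ℝ), D u * fejerKernel (l * (y - u)))) := by
  refine tendsto_integral_filter_of_dominated_convergence (fun u => M * fejerKernel (l * (y - u)))
    (.of_forall fun ε => Measurable.aestronglyMeasurable (by fun_prop)) ?_
    ((integrable_fejerKernel_comp_mul_sub hl y).const_mul M).integrableOn
    (.of_forall fun u => ?_)
  · filter_upwards [self_mem_nhdsWithin] with ε hε
    refine (ae_restrict_iff' measurableSet_Ioi).2 (.of_forall fun u hu => ?_)
    have hexp : Real.exp (-ε * u) ≤ 1 := by
      rw [Real.exp_le_one_iff, neg_mul, neg_nonpos]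
      exact (mul_pos hε hu).le
    rw [norm_mul, norm_mul, Real.norm_of_nonneg (fejerKernel_nonneg _),
      Real.norm_of_nonneg (Real.exp_nonneg _), Real.norm_eq_abs]
    refine mul_le_mul_of_nonneg_right ?_ (fejerKernel_nonneg _)
    exact (mul_le_of_le_one_right (abs_nonneg _) hexp).trans (hDM u)
  · have hcont : ContinuousAt
        (fun ε : ℝ => D u * Real.exp (-ε * u) * fejerKernel (l * (y - u))) 0 := by fun_prop
    simpa using hcont.tendsto.mono_left (nhdsWithin_le_nhds (s := Ioi 0))

lemma tendsto_integral_triangle_mul_exp_mul (hG : ContinuousOn G {s | 0 ≤ s.re}) (l y : ℝ) :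
    Tendsto (fun ε : ℝ => ∫ t in Icc (-1 : ℝ) 1, ((1 - |t| : ℝ) : ℂ) *
        Complex.exp (Complex.I * (l * y * t)) * G ((ε : ℂ) + Complex.I * (l * t)))
      (𝓝[>] 0) (𝓝 (∫ t in Icc (-1 : ℝ) 1, ((1 - |t| : ℝ) : ℂ) *
        Complex.exp (Complex.I * (l * y * t)) * G (Complex.I * (l * t)))) := by
  set f : ℝ → ℝ → ℂ := fun ε t => ((1 - |t| : ℝ) : ℂ) * Complex.exp (Complex.I * (l * y * t)) *
    G ((max ε 0 : ℝ) + Complex.I * (l * t)) with hf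
  have hf_cont : Continuous f.uncurry := by
    refine Continuous.mul (by fun_prop) (hG.comp_continuous (by fun_prop) fun z => ?_)
    simp
  have hlim := ((continuous_parametric_integral_of_continuous (μ := volume) hf_cont
    (isCompact_Icc (a := -1) (b := 1))).tendsto 0).mono_left (nhdsWithin_le_nhds (s := Ioi 0))
  simp only [hf, max_self, Complex.ofReal_zero, zero_add] at hlim
  refine hlim.congr' ?_
  filter_upwards [self_mem_nhdsWithin] with ε hε
  rw [max_eq_left (mem_Ioi.1 hε).le]

/-- The damping factor is removed by letting `ε → 0` in `integral_mul_exp_mul_fejerKernel`. -/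
lemma integral_mul_fejerKernel (hD : Measurable D) (hDM : ∀ u, |D u| ≤ M)
    (hG : ContinuousOn G {s | 0 ≤ s.re})
    (hDG : ∀ s : ℂ, 0 < s.re → ∫ u in Ioi (0 : ℝ), (D u : ℂ) * Complex.exp (-s * u) = G s)
    {l : ℝ} (hl : l ≠ 0) (y : ℝ) :
    ((∫ u in Ioi (0 : ℝ), D u * fejerKernel (l * (y - u)) : ℝ) : ℂ) =
      ∫ t in Icc (-1 : ℝ) 1, ((1 - |t| : ℝ) : ℂ) * Complex.exp (Complex.I * (l * y * t)) *
        G (Complex.I * (l * t)) := by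
  refine tendsto_nhds_unique ((Complex.continuous_ofReal.tendsto _).comp
    (tendsto_integral_mul_exp_mul_fejerKernel hD hDM hl y))
    ((tendsto_integral_triangle_mul_exp_mul hG l y).congr' ?_)
  filter_upwards [self_mem_nhdsWithin] with ε hε
  rw [Function.comp_apply, integral_mul_exp_mul_fejerKernel hD hDM hε hl y]
  refine setIntegral_congr_fun measurableSet_Icc fun t _ => ?_
  simp only [hDG _ (show 0 < ((ε : ℂ) + Complex.I * (l * t)).re by simpa using hε)]

lemma tendsto_integral_mul_fejerKernel_zero (hD : Measurable D) (hDM : ∀ u, |D u| ≤ M)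
    (hG : ContinuousOn G {s | 0 ≤ s.re})
    (hDG : ∀ s : ℂ, 0 < s.re → ∫ u in Ioi (0 : ℝ), (D u : ℂ) * Complex.exp (-s * u) = G s)
    {l : ℝ} (hl : 0 < l) :
    Tendsto (fun y => ∫ u in Ioi (0 : ℝ), D u * fejerKernel (l * (y - u))) atTop (𝓝 0) := by
  have hphase : Tendsto (fun y : ℝ => -(l * y / (2 * Real.pi))) atTop (cocompact ℝ) :=
    (tendsto_neg_atTop_atBot.comp <|
      (tendsto_id.const_mul_atTop hl).atTop_div_const (by positivity)).mono_right atBot_le_cocompact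
  have hriemannLebesgue := (Real.tendsto_integral_exp_smul_cocompact
    ((Icc (-1 : ℝ) 1).indicator
      fun t => ((1 - |t| : ℝ) : ℂ) * G (Complex.I * (l * t)))).comp hphase
  have hlim : Tendsto
      (fun y => ((∫ u in Ioi (0 : ℝ), D u * fejerKernel (l * (y - u)) : ℝ) : ℂ))
      atTop (𝓝 0) := by
    refine hriemannLebesgue.congr fun y => ?_
    rw [integral_mul_fejerKernel hD hDM hG hDG hl.ne' y, Function.comp_apply,
      ← integral_indicator measurableSet_Icc]
    refine integral_congr_ae (.of_forall fun t => ?_)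
    by_cases ht : t ∈ Icc (-1 : ℝ) 1
    · have harg : (↑(2 * Real.pi * -(t * -(l * y / (2 * Real.pi)))) : ℂ) * Complex.I =
          Complex.I * (l * y * t) := by
        push_cast
        field_simp [Complex.ofReal_ne_zero.2 Real.pi_ne_zero]
      simp only [indicator_of_mem ht]
      rw [Circle.smul_def, Real.fourierChar_apply, smul_eq_mul, harg]
      ring
    · simp only [indicator_of_notMem ht, smul_zero]
  have hre := (Complex.continuous_re.tendsto _).comp hlim
  simpa only [Function.comp_def, Complex.ofReal_re, Complex.zero_re] using hre

end LaplaceTransform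

section KernelAverages

variable {B K : ℝ → ℝ} {M c : ℝ}

/-- `B` is a measurable function with values in `[0, M]` for which `exp u * B u` is nondecreasing.
This is the regularity under which convergence of averages of `B` forces convergence of `B`. -/
structure IsSlowlyDecreasing (B : ℝ → ℝ) (M : ℝ) : Prop where
  measurable : Measurable B
  nonneg : ∀ u, 0 ≤ B u
  le : ∀ u, B u ≤ M
  le_exp_mul : ∀ u s, 0 ≤ s → B u ≤ Real.exp s * B (u + s)

lemma IsSlowlyDecreasing.integrable_comp_sub_mul_mul (hB : IsSlowlyDecreasing B M)
    (hK : Integrable K) (h y : ℝ) : Integrable fun v => B (y - h * v) * K v := by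
  have hB_meas := hB.measurable
  refine hK.bdd_mul (c := M) (Measurable.aestronglyMeasurable (by fun_prop))
    (.of_forall fun v => ?_)
  rw [Real.norm_of_nonneg (hB.nonneg _)]
  exact hB.le _

lemma tendsto_setIntegral_Iic_mul (hK : Integrable K) {l : ℝ} (hl : 0 < l) :
    Tendsto (fun y => ∫ v in Iic (l * y), K v) atTop (𝓝 (∫ v, K v)) :=
  (aecover_Iic (tendsto_id.const_mul_atTop hl)).integral_tendsto_of_countably_generated hK

lemma IsSlowlyDecreasing.tendsto_integral_comp_sub_mul_mul (hB : IsSlowlyDecreasing B M)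
    (hB_neg : ∀ u < 0, B u = 0) (hK : Integrable K) {l : ℝ} (hl : 0 < l)
    (h : Tendsto (fun y => ∫ u in Ioi (0 : ℝ), (B u - c) * K (l * (y - u))) atTop (𝓝 0)) :
    Tendsto (fun y => ∫ v, B (y - l⁻¹ * v) * K v) atTop (𝓝 (c * ∫ v, K v)) := by
  have hsubst : ∀ y, ∫ v, B (y - l⁻¹ * v) * K v =
      l * (∫ u in Ioi (0 : ℝ), (B u - c) * K (l * (y - u))) + c * ∫ v in Iic (l * y), K v := by
    intro y
    set f : ℝ → ℝ := fun v => B (y - l⁻¹ * v) * K v - c * (Iic (l * y)).indicator K v with hf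
    have hf_comp : ∫ u in Ioi (0 : ℝ), (B u - c) * K (l * (y - u)) = ∫ u, f (l * (y - u)) := by
      rw [← integral_Ici_eq_integral_Ioi, ← integral_indicator measurableSet_Ici]
      refine integral_congr_ae (.of_forall fun u => ?_)
      have hu : y - l⁻¹ * (l * (y - u)) = u := by
        rw [inv_mul_cancel_left₀ hl.ne', sub_sub_cancel]
      have hmem : l * (y - u) ∈ Iic (l * y) ↔ 0 ≤ u := by
        rw [mem_Iic, mul_le_mul_iff_right₀ hl, sub_le_self_iff]
      by_cases h0 : 0 ≤ u
      · simp only [hf, hu, indicator_of_mem (mem_Ici.2 h0), indicator_of_mem (hmem.2 h0), sub_mul]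
      · simp only [hf, hu, indicator_of_notMem (mt mem_Ici.1 h0),
          indicator_of_notMem (mt hmem.1 h0), hB_neg u (not_le.1 h0), zero_mul, mul_zero, sub_zero]
    have hf_scale : l * ∫ u, f (l * (y - u)) = ∫ v, f v := by
      rw [integral_sub_left_eq_self (fun u => f (l * u)) volume y, Measure.integral_comp_mul_left,
        smul_eq_mul, abs_of_pos (inv_pos.2 hl), mul_inv_cancel_left₀ hl.ne']
    rw [hf_comp, hf_scale, hf, integral_sub (hB.integrable_comp_sub_mul_mul hK _ _)
      ((hK.indicator measurableSet_Iic).const_mul c), integral_const_mul,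
      integral_indicator measurableSet_Iic, sub_add_cancel]
  have hlim := (h.const_mul l).add ((tendsto_setIntegral_Iic_mul hK hl).const_mul c)
  rw [mul_zero, zero_add] at hlim
  exact hlim.congr fun y => (hsubst y).symm

/-- For `|v| ≤ R` the point `y + h R - h v` lies in `[y, y + 2 h R]`. -/
lemma IsSlowlyDecreasing.mul_setIntegral_Icc_le (hB : IsSlowlyDecreasing B M)
    (hK : Integrable K) (hK0 : ∀ v, 0 ≤ K v) {h : ℝ} (hh : 0 ≤ h) (R y : ℝ) :
    B y * ∫ v in Icc (-R) R, K v ≤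
      Real.exp (2 * (h * R)) * ∫ v, B (y + h * R - h * v) * K v := by
  have hint := (hB.integrable_comp_sub_mul_mul hK h (y + h * R)).const_mul
    (Real.exp (2 * (h * R)))
  rw [← integral_const_mul, ← integral_const_mul]
  refine le_trans ?_ (setIntegral_le_integral (s := Icc (-R) R) hint (.of_forall fun v =>
    mul_nonneg (Real.exp_nonneg _) (mul_nonneg (hB.nonneg _) (hK0 _))))
  refine setIntegral_mono_on (hK.const_mul _).integrableOn hint.integrableOn measurableSet_Icc
    fun v hv => ?_
  have hshift : B y ≤ Real.exp (h * R - h * v) * B (y + h * R - h * v) := by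
    have := hB.le_exp_mul y (h * R - h * v) (sub_nonneg.2 (mul_le_mul_of_nonneg_left hv.2 hh))
    rwa [← add_sub_assoc] at this
  rw [← mul_assoc]
  refine mul_le_mul_of_nonneg_right (hshift.trans ?_) (hK0 v)
  exact mul_le_mul_of_nonneg_right (Real.exp_le_exp.2 (by nlinarith [hv.1])) (hB.nonneg _)

lemma IsSlowlyDecreasing.integral_comp_sub_mul_mul_le (hB : IsSlowlyDecreasing B M)
    (hK : Integrable K) (hK0 : ∀ v, 0 ≤ K v) {h : ℝ} (hh : 0 ≤ h) (R y : ℝ) :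
    ∫ v, B (y - h * R - h * v) * K v ≤
      Real.exp (2 * (h * R)) * B y * (∫ v in Icc (-R) R, K v) +
        M * ((∫ v, K v) - ∫ v in Icc (-R) R, K v) := by
  have hint := hB.integrable_comp_sub_mul_mul hK h (y - h * R)
  have hcompl : (∫ v, K v) - ∫ v in Icc (-R) R, K v = ∫ v in (Icc (-R) R)ᶜ, K v := by
    rw [← integral_add_compl (measurableSet_Icc (a := -R) (b := R)) hK, add_sub_cancel_left]
  rw [← integral_add_compl (measurableSet_Icc (a := -R) (b := R)) hint, hcompl,
    ← integral_const_mul, ← integral_const_mul]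
  refine add_le_add
    (setIntegral_mono_on hint.integrableOn (hK.const_mul _).integrableOn measurableSet_Icc
      fun v hv => ?_)
    (setIntegral_mono_on hint.integrableOn (hK.const_mul _).integrableOn measurableSet_Icc.compl
      fun v _ => mul_le_mul_of_nonneg_right (hB.le _) (hK0 v))
  have hshift : B (y - h * R - h * v) ≤ Real.exp (h * R + h * v) * B y := by
    have := hB.le_exp_mul (y - h * R - h * v) (h * R + h * v) (by nlinarith [hv.1])
    rwa [sub_sub, sub_add_cancel, ← sub_sub] at this
  refine mul_le_mul_of_nonneg_right (hshift.trans ?_) (hK0 v)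
  exact mul_le_mul_of_nonneg_right (Real.exp_le_exp.2 (by nlinarith [hv.2])) (hB.nonneg _)

lemma tendsto_setIntegral_Icc_neg (hK : Integrable K) :
    Tendsto (fun R : ℝ => ∫ v in Icc (-R) R, K v) atTop (𝓝 (∫ v, K v)) :=
  (aecover_Icc tendsto_neg_atTop_atBot tendsto_id).integral_tendsto_of_countably_generated hK

lemma tendsto_exp_two_mul_mul_nhdsGT_zero (R : ℝ) :
    Tendsto (fun h : ℝ => Real.exp (2 * (h * R))) (𝓝[>] 0) (𝓝 1) := by
  have hcont : Continuous fun h : ℝ => Real.exp (2 * (h * R)) := by fun_prop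
  simpa using (hcont.tendsto 0).mono_left (nhdsWithin_le_nhds (s := Ioi 0))

/-- One first fixes a window `[-R, R]` carrying almost all of the mass of `K`, then a scale `h`
at which `B` is almost monotone across the window. -/
lemma IsSlowlyDecreasing.eventually_gt (hB : IsSlowlyDecreasing B M)
    (hK : Integrable K) (hK0 : ∀ v, 0 ≤ K v) (hK_pos : 0 < ∫ v, K v)
    (h_avg : ∀ h > 0, Tendsto (fun y => ∫ v, B (y - h * v) * K v) atTop (𝓝 (c * ∫ v, K v)))
    {c' : ℝ} (hc' : c' < c) : ∀ᶠ y in atTop, c' < B y := by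
  set I := ∫ v, K v
  set J : ℝ → ℝ := fun R => ∫ v in Icc (-R) R, K v
  have hJ : Tendsto J atTop (𝓝 I) := tendsto_setIntegral_Icc_neg hK
  obtain ⟨R, hJR_pos, hR⟩ : ∃ R, 0 < J R ∧ c' * J R + M * (I - J R) < c * I := by
    have hlim := (hJ.const_mul c').add ((tendsto_const_nhds (x := I).sub hJ).const_mul M)
    rw [sub_self, mul_zero, add_zero] at hlim
    exact ((hJ.eventually_const_lt hK_pos).and
      (hlim.eventually_lt_const (mul_lt_mul_of_pos_right hc' hK_pos))).exists
  obtain ⟨h, hh, hhR⟩ : ∃ h > 0, Real.exp (2 * (h * R)) * (c' * J R) + M * (I - J R) < c * I := by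
    have hlim := ((tendsto_exp_two_mul_mul_nhdsGT_zero R).mul_const (c' * J R)).add_const
      (M * (I - J R))
    rw [one_mul] at hlim
    exact (eventually_mem_nhdsWithin.and (hlim.eventually_lt_const hR)).exists
  filter_upwards [((h_avg h hh).comp (tendsto_atTop_add_const_right atTop (-(h * R))
    tendsto_id)).eventually_const_lt hhR] with y hy
  simp only [Function.comp_apply, id, ← sub_eq_add_neg] at hy
  have hupper := hy.trans_le (hB.integral_comp_sub_mul_mul_le hK hK0 hh.le R y)
  rw [mul_assoc, add_lt_add_iff_right, mul_lt_mul_iff_right₀ (Real.exp_pos _)] at hupper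
  exact lt_of_mul_lt_mul_right hupper hJR_pos.le

lemma IsSlowlyDecreasing.eventually_lt (hB : IsSlowlyDecreasing B M)
    (hK : Integrable K) (hK0 : ∀ v, 0 ≤ K v) (hK_pos : 0 < ∫ v, K v)
    (h_avg : ∀ h > 0, Tendsto (fun y => ∫ v, B (y - h * v) * K v) atTop (𝓝 (c * ∫ v, K v)))
    {c' : ℝ} (hc' : c < c') : ∀ᶠ y in atTop, B y < c' := by
  set I := ∫ v, K v
  set J : ℝ → ℝ := fun R => ∫ v in Icc (-R) R, K v
  have hJ : Tendsto J atTop (𝓝 I) := tendsto_setIntegral_Icc_neg hK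
  obtain ⟨R, hJR_pos, hR⟩ : ∃ R, 0 < J R ∧ c * I < c' * J R :=
    ((hJ.eventually_const_lt hK_pos).and ((hJ.const_mul c').eventually_const_lt
      (mul_lt_mul_of_pos_right hc' hK_pos))).exists
  obtain ⟨h, hh, hhR⟩ : ∃ h > 0, Real.exp (2 * (h * R)) * (c * I) < c' * J R := by
    have hlim := (tendsto_exp_two_mul_mul_nhdsGT_zero R).mul_const (c * I)
    rw [one_mul] at hlim
    exact (eventually_mem_nhdsWithin.and (hlim.eventually_lt_const hR)).exists
  filter_upwards [(((h_avg h hh).comp (tendsto_atTop_add_const_right atTop (h * R)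
    tendsto_id)).const_mul (Real.exp (2 * (h * R)))).eventually_lt_const hhR] with y hy
  have hlower := hB.mul_setIntegral_Icc_le hK hK0 hh.le R y
  exact lt_of_mul_lt_mul_right (hlower.trans_lt hy) hJR_pos.le

theorem IsSlowlyDecreasing.tendsto_of_tendsto_average (hB : IsSlowlyDecreasing B M)
    (hK : Integrable K) (hK0 : ∀ v, 0 ≤ K v) (hK_pos : 0 < ∫ v, K v)
    (h_avg : ∀ h > 0, Tendsto (fun y => ∫ v, B (y - h * v) * K v) atTop (𝓝 (c * ∫ v, K v))) :
    Tendsto B atTop (𝓝 c) :=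
  tendsto_order.2 ⟨fun _ hc' => hB.eventually_gt hK hK0 hK_pos h_avg hc',
    fun _ hc' => hB.eventually_lt hK hK0 hK_pos h_avg hc'⟩

/-- The Tauberian theorem of Wiener and Ikehara for Laplace transforms. -/
theorem IsSlowlyDecreasing.tendsto_of_laplace {G : ℂ → ℂ} (hB : IsSlowlyDecreasing B M)
    (hB_neg : ∀ u < 0, B u = 0) (hG : ContinuousOn G {s | 0 ≤ s.re})
    (hBG : ∀ s : ℂ, 0 < s.re →
      ∫ u in Ioi (0 : ℝ), ((B u - c : ℝ) : ℂ) * Complex.exp (-s * u) = G s) :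
    Tendsto B atTop (𝓝 c) := by
  refine hB.tendsto_of_tendsto_average integrable_fejerKernel fejerKernel_nonneg
    integral_fejerKernel_pos fun h hh => ?_
  have hbound : ∀ u, |B u - c| ≤ M + |c| := fun u =>
    (abs_sub _ _).trans (add_le_add_left ((abs_of_nonneg (hB.nonneg u)).trans_le (hB.le u)) _)
  have hzero := tendsto_integral_mul_fejerKernel_zero (hB.measurable.sub_const c) hbound hG hBG
    (inv_pos.2 hh)
  simpa only [inv_inv] using hB.tendsto_integral_comp_sub_mul_mul hB_neg integrable_fejerKernel
    (inv_pos.2 hh) hzero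

end KernelAverages

section WienerIkehara

variable {f : ℕ → ℝ} {M c : ℝ}

lemma isSlowlyDecreasing_sum_mul_exp (hf : ∀ n, 0 ≤ f n)
    (hM : ∀ n : ℕ, ∑ k ∈ Finset.Icc 1 n, f k ≤ M * n) (hM0 : 0 ≤ M) :
    IsSlowlyDecreasing
      (fun u => (∑ k ∈ Finset.Icc 1 ⌊Real.exp u⌋₊, f k) * Real.exp (-u)) M := by
  have hmono : Monotone fun x : ℝ => ∑ k ∈ Finset.Icc 1 ⌊x⌋₊, f k := fun x y hxy =>
    Finset.sum_le_sum_of_subset_of_nonneg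
      (Finset.Icc_subset_Icc le_rfl (Nat.floor_mono hxy)) fun n _ _ => hf n
  refine ⟨?_, fun u => mul_nonneg (Finset.sum_nonneg fun n _ => hf n) (Real.exp_nonneg _),
    fun u => ?_, fun u s hs => ?_⟩
  · exact (hmono.measurable.comp Real.measurable_exp).mul (by fun_prop)
  · rw [Real.exp_neg, ← div_eq_mul_inv, div_le_iff₀ (Real.exp_pos u)]
    exact (hM _).trans (mul_le_mul_of_nonneg_left (Nat.floor_le (Real.exp_nonneg u)) hM0)
  · have hexp : Real.exp s * Real.exp (-(u + s)) = Real.exp (-u) := by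
      rw [← Real.exp_add]
      ring_nf
    rw [mul_left_comm, hexp]
    exact mul_le_mul_of_nonneg_right (hmono (Real.exp_le_exp.2 (by linarith)))
      (Real.exp_nonneg _)

lemma integral_sum_mul_exp_eq_LSeries_div (hf : ∀ n, 0 ≤ f n)
    (hM : ∀ n : ℕ, ∑ k ∈ Finset.Icc 1 n, f k ≤ M * n) {s : ℂ} (hs : 0 < s.re) :
    ∫ u in Ioi (0 : ℝ), (((∑ k ∈ Finset.Icc 1 ⌊Real.exp u⌋₊, f k) * Real.exp (-u) : ℝ) : ℂ) *
        Complex.exp (-s * u) = LSeries (fun n => f n) (s + 1) / (s + 1) := by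
  have hs1 : s + 1 ≠ 0 := Complex.ne_zero_of_re_pos (by simpa using hs.trans (lt_add_one _))
  have hbigO : (fun n : ℕ => ∑ k ∈ Finset.Icc 1 n, f k) =O[atTop] fun n => (n : ℝ) ^ (1 : ℝ) := by
    refine .of_bound M (.of_forall fun n => ?_)
    rw [Real.norm_of_nonneg (Finset.sum_nonneg fun n _ => hf n), Real.rpow_one,
      Real.norm_of_nonneg n.cast_nonneg]
    exact hM n
  rw [LSeries_eq_mul_integral_of_nonneg f zero_le_one (by simpa using hs) hbigO hf,
    mul_div_cancel_left₀ _ hs1, ← Real.exp_zero, ← integral_comp_exp_Ioi]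
  refine integral_congr_ae (.of_forall fun u => ?_)
  simp only
  rw [Complex.real_smul,
    Complex.cpow_def_of_ne_zero (Complex.ofReal_ne_zero.2 (Real.exp_ne_zero u)),
    ← Complex.ofReal_log (Real.exp_nonneg _), Real.log_exp]
  push_cast
  rw [mul_left_comm, mul_assoc, ← Complex.exp_add, ← Complex.exp_add]
  ring_nf

lemma IsSlowlyDecreasing.integral_sub_const_mul_exp {B : ℝ → ℝ} (hB : IsSlowlyDecreasing B M)
    {s : ℂ} (hs : 0 < s.re) :
    ∫ u in Ioi (0 : ℝ), ((B u - c : ℝ) : ℂ) * Complex.exp (-s * u) =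
      (∫ u in Ioi (0 : ℝ), (B u : ℂ) * Complex.exp (-s * u)) - c / s := by
  have hexp : IntegrableOn (fun u : ℝ => Complex.exp (-s * u)) (Ioi 0) :=
    integrableOn_exp_mul_complex_Ioi (by simpa using hs) 0
  have hB_exp : IntegrableOn (fun u : ℝ => (B u : ℂ) * Complex.exp (-s * u)) (Ioi 0) := by
    refine hexp.bdd_mul (c := M)
      (Complex.measurable_ofReal.comp hB.measurable).aestronglyMeasurable (.of_forall fun u => ?_)
    rw [Complex.norm_real, Real.norm_of_nonneg (hB.nonneg u)]
    exact hB.le u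
  simp_rw [Complex.ofReal_sub, sub_mul]
  rw [integral_sub hB_exp (hexp.const_mul _), integral_const_mul,
    integral_exp_mul_complex_Ioi (by simpa using hs), Complex.ofReal_zero, mul_zero,
    Complex.exp_zero, neg_div_neg_eq, mul_one_div]

/-- In the variable `u = log x` the hypothesis says that the Laplace transform of the normalised
summatory function, minus `c`, extends continuously to the imaginary axis. -/
theorem tendsto_sum_div_of_LSeries_sub_pole {F : ℂ → ℂ} (hf : ∀ n, 0 ≤ f n)
    (hM : ∀ n : ℕ, ∑ k ∈ Finset.Icc 1 n, f k ≤ M * n)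
    (hF : ContinuousOn F {s | 1 ≤ s.re})
    (hLF : ∀ s : ℂ, 1 < s.re → LSeries (fun n => f n) s - c / (s - 1) = F s) :
    Tendsto (fun x : ℝ => (∑ k ∈ Finset.Icc 1 ⌊x⌋₊, f k) / x) atTop (𝓝 c) := by
  have hM0 : 0 ≤ M := by simpa using (hf 1).trans ((hM 1).trans' (by simp))
  have hB := isSlowlyDecreasing_sum_mul_exp hf hM hM0
  set B : ℝ → ℝ := fun u => (∑ k ∈ Finset.Icc 1 ⌊Real.exp u⌋₊, f k) * Real.exp (-u) with hB_def
  have hB_neg : ∀ u < 0, B u = 0 := fun u hu => by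
    simp [hB_def, Nat.floor_eq_zero.2 (by simpa using hu : Real.exp u < 1)]
  have hG : ContinuousOn (fun s => (F (s + 1) - c) / (s + 1)) {s | 0 ≤ s.re} := by
    refine ((hF.comp (by fun_prop) fun s hs => by simpa using hs).sub continuousOn_const).div
      (by fun_prop) fun s hs => Complex.ne_zero_of_re_pos ?_
    simpa using (hs : 0 ≤ s.re).trans_lt (lt_add_one _)
  have hlaplace : ∀ s : ℂ, 0 < s.re →
      ∫ u in Ioi (0 : ℝ), ((B u - c : ℝ) : ℂ) * Complex.exp (-s * u) =
        (F (s + 1) - c) / (s + 1) := by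
    intro s hs
    have hs0 : s ≠ 0 := Complex.ne_zero_of_re_pos hs
    have hs1 : s + 1 ≠ 0 := Complex.ne_zero_of_re_pos (by simpa using hs.trans (lt_add_one _))
    rw [hB.integral_sub_const_mul_exp hs, hB_def,
      integral_sum_mul_exp_eq_LSeries_div hf hM hs, ← hLF (s + 1) (by simpa using hs)]
    rw [add_sub_cancel_right]
    field_simp
    ring
  refine ((hB.tendsto_of_laplace hB_neg hG hlaplace).comp Real.tendsto_log_atTop).congr' ?_
  filter_upwards [eventually_gt_atTop 0] with x hx
  rw [hB_def, Function.comp_apply, Real.exp_neg, Real.exp_log hx, div_eq_mul_inv]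

end WienerIkehara

section PrimeDensity

variable {S : Set ℕ} {c : ℝ}

/-- The number of positive elements of `S` not exceeding `x`. -/
noncomputable def countUpTo (S : Set ℕ) (x : ℝ) : ℕ := #{n ∈ Finset.Ioc 0 ⌊x⌋₊ | n ∈ S}

/-- `S` has as many elements up to `x` as a set of primes of relative density `c`, that is
`c * x / log x` asymptotically. -/
def HasPrimeDensity (S : Set ℕ) (c : ℝ) : Prop :=
  Tendsto (fun x : ℝ => countUpTo S x * Real.log x / x) atTop (𝓝 c)

lemma sum_log_le_countUpTo_mul_log (S : Set ℕ) {x : ℝ} (hx : 0 ≤ x) :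
    ∑ n ∈ Finset.Ioc 0 ⌊x⌋₊ with n ∈ S, Real.log n ≤ countUpTo S x * Real.log x := by
  rw [countUpTo, ← nsmul_eq_mul]
  refine Finset.sum_le_card_nsmul _ _ _ fun n hn => ?_
  simp only [Finset.mem_filter, Finset.mem_Ioc] at hn
  exact Real.log_le_log (by exact_mod_cast hn.1.1) ((Nat.le_floor_iff hx).1 hn.1.2)

lemma countUpTo_le_add_card (S : Set ℕ) (x : ℝ) {y : ℝ} (hy : 0 ≤ y) :
    (countUpTo S x : ℝ) ≤ y + #{n ∈ Finset.Ioc 0 ⌊x⌋₊ | n ∈ S ∧ y < n} := by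
  have hsubset : {n ∈ Finset.Ioc 0 ⌊x⌋₊ | n ∈ S} ⊆
      Finset.Ioc 0 ⌊y⌋₊ ∪ {n ∈ Finset.Ioc 0 ⌊x⌋₊ | n ∈ S ∧ y < n} := by
    intro n hn
    simp only [Finset.mem_filter, Finset.mem_union, Finset.mem_Ioc, Nat.le_floor_iff hy] at hn ⊢
    grind
  have hcard := (Finset.card_le_card hsubset).trans (Finset.card_union_le _ _)
  rw [Nat.card_Ioc, tsub_zero] at hcard
  calc (countUpTo S x : ℝ) ≤ ⌊y⌋₊ + #{n ∈ Finset.Ioc 0 ⌊x⌋₊ | n ∈ S ∧ y < n} := by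
        exact_mod_cast hcard
    _ ≤ _ := by gcongr; exact Nat.floor_le hy

lemma log_mul_countUpTo_sub_le_sum_log (S : Set ℕ) (x : ℝ) {y : ℝ} (hy : 1 ≤ y) :
    Real.log y * (countUpTo S x - y) ≤ ∑ n ∈ Finset.Ioc 0 ⌊x⌋₊ with n ∈ S, Real.log n := by
  calc Real.log y * (countUpTo S x - y)
      ≤ Real.log y * #{n ∈ Finset.Ioc 0 ⌊x⌋₊ | n ∈ S ∧ y < n} := by
        refine mul_le_mul_of_nonneg_left ?_ (Real.log_nonneg hy)
        linarith [countUpTo_le_add_card S x (zero_le_one.trans hy)]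
    _ ≤ ∑ n ∈ Finset.Ioc 0 ⌊x⌋₊ with n ∈ S ∧ y < n, Real.log n := by
        rw [mul_comm, ← nsmul_eq_mul]
        refine Finset.card_nsmul_le_sum _ _ _ fun n hn => ?_
        exact Real.log_le_log (zero_lt_one.trans_le hy) (Finset.mem_filter.1 hn).2.2.le
    _ ≤ _ := Finset.sum_le_sum_of_subset_of_nonneg
        (Finset.monotone_filter_right _ fun n _ hn => hn.1) fun n _ _ => Real.log_natCast_nonneg n

/-- Elements up to `y = x / (log x) ^ 2` are negligible, and `log n ~ log x` for `y < n ≤ x`. -/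
theorem hasPrimeDensity_of_tendsto_sum_log
    (h : Tendsto (fun x : ℝ => (∑ n ∈ Finset.Ioc 0 ⌊x⌋₊ with n ∈ S, Real.log n) / x)
      atTop (𝓝 c)) : HasPrimeDensity S c := by
  set y : ℝ → ℝ := fun x => x / Real.log x ^ 2 with hy
  have hlog_y : (fun x => Real.log (y x)) ~[atTop] Real.log := by
    have hloglog : (fun x => 2 * Real.log (Real.log x)) =o[atTop] Real.log :=
      (Real.isLittleO_log_id_atTop.comp_tendsto Real.tendsto_log_atTop).const_mul_left 2
    refine (IsEquivalent.refl.sub_isLittleO hloglog).congr_left ?_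
    filter_upwards [eventually_gt_atTop 0, Real.tendsto_log_atTop.eventually_ne_atTop 0]
      with x hx hlogx
    simp [hy, Real.log_div hx.ne' (pow_ne_zero 2 hlogx)]
  have hlog_y_top := hlog_y.symm.tendsto_atTop Real.tendsto_log_atTop
  have hratio : Tendsto (fun x => Real.log x / Real.log (y x)) atTop (𝓝 1) :=
    (isEquivalent_iff_tendsto_one (hlog_y_top.eventually_ne_atTop 0)).1 hlog_y.symm
  have hupper := (h.mul hratio).add (tendsto_inv_atTop_zero.comp Real.tendsto_log_atTop)
  rw [mul_one, add_zero] at hupper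
  refine tendsto_of_tendsto_of_tendsto_of_le_of_le' h hupper ?_ ?_
  · filter_upwards [eventually_ge_atTop 0] with x hx
    exact div_le_div_of_nonneg_right (sum_log_le_countUpTo_mul_log S hx) hx
  · filter_upwards [eventually_gt_atTop 0, Real.tendsto_log_atTop.eventually_gt_atTop 0,
      hlog_y_top.eventually_gt_atTop 0] with x hx hlogx hlogy
    have hy_pos : 0 < y x := div_pos hx (pow_pos hlogx 2)
    have hcount : (countUpTo S x : ℝ) ≤
        (∑ n ∈ Finset.Ioc 0 ⌊x⌋₊ with n ∈ S, Real.log n) / Real.log (y x) + y x := by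
      rw [← sub_le_iff_le_add, le_div_iff₀' hlogy]
      exact log_mul_countUpTo_sub_le_sum_log S x ((Real.log_pos_iff hy_pos.le).1 hlogy).le
    calc (countUpTo S x : ℝ) * Real.log x / x
        ≤ ((∑ n ∈ Finset.Ioc 0 ⌊x⌋₊ with n ∈ S, Real.log n) / Real.log (y x) + y x) *
            Real.log x / x := by gcongr
      _ = _ := by
        simp only [hy, Function.comp_apply]
        field_simp

end PrimeDensity

section ResidueClass

open ArithmeticFunction.vonMangoldt

variable {q : ℕ} {a : ZMod q}

lemma tendsto_sum_residueClass_div [NeZero q] (ha : IsUnit a) :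
    Tendsto (fun x : ℝ => (∑ n ∈ Finset.Icc 1 ⌊x⌋₊, residueClass a n) / x) atTop
      (𝓝 (q.totient : ℝ)⁻¹) := by
  refine tendsto_sum_div_of_LSeries_sub_pole (M := Real.log 4 + 4) (residueClass_nonneg a)
    (fun n => ?_) (continuousOn_LFunctionResidueClassAux a) fun s hs => ?_
  · calc ∑ k ∈ Finset.Icc 1 n, residueClass a k ≤ Chebyshev.psi n := by
          rw [Chebyshev.psi, Nat.floor_natCast]
          exact Finset.sum_le_sum fun k _ => residueClass_le a k
      _ ≤ (Real.log 4 + 4) * n := Chebyshev.psi_le_const_mul_self n.cast_nonneg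
  · simpa using (eqOn_LFunctionResidueClassAux ha hs).symm

lemma abs_residueClass_sub_log_le (a : ZMod q) (n : ℕ) :
    |residueClass a n - if n.Prime ∧ (n : ZMod q) = a then Real.log n else 0| ≤
      ArithmeticFunction.vonMangoldt n - if n.Prime then Real.log n else 0 := by
  by_cases hprime : n.Prime
  · by_cases hres : (n : ZMod q) = a <;>
      simp [residueClass, hprime, hres, ArithmeticFunction.vonMangoldt_apply_prime]
  · simpa [hprime, abs_of_nonneg (residueClass_nonneg a n)] using residueClass_le a n

theorem hasPrimeDensity_residueClass [NeZero q] (ha : IsUnit a) :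
    HasPrimeDensity {p | p.Prime ∧ (p : ZMod q) = a} (q.totient : ℝ)⁻¹ := by
  set S : Set ℕ := {p | p.Prime ∧ (p : ZMod q) = a}
  set ψ : ℝ → ℝ := fun x => ∑ n ∈ Finset.Icc 1 ⌊x⌋₊, residueClass a n
  set θ : ℝ → ℝ := fun x => ∑ n ∈ Finset.Ioc 0 ⌊x⌋₊ with n ∈ S, Real.log n
  have hle : ∀ x, ‖ψ x - θ x‖ ≤ ‖Chebyshev.psi x - Chebyshev.theta x‖ := by
    intro x
    simp only [ψ, θ, Chebyshev.psi, Chebyshev.theta, Finset.sum_filter, ← Finset.sum_sub_distrib,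
      show Finset.Icc 1 ⌊x⌋₊ = Finset.Ioc 0 ⌊x⌋₊ from rfl]
    exact (Finset.abs_sum_le_sum_abs _ _).trans ((Finset.sum_le_sum fun n _ =>
      abs_residueClass_sub_log_le a n).trans (le_abs_self _))
  have hsqrt : Real.sqrt =o[atTop] fun x : ℝ => x := by
    rw [isLittleO_iff_tendsto' ((eventually_ne_atTop 0).mono fun x hx h => absurd h hx)]
    simp only [Real.sqrt_div_self', one_div]
    exact tendsto_inv_atTop_zero.comp Real.tendsto_sqrt_atTop
  have hlittleO : (fun x => ψ x - θ x) =o[atTop] fun x : ℝ => x :=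
    ((IsBigO.of_bound' (.of_forall hle)).trans Chebyshev.isBigO_psi_sub_theta_sqrt).trans_isLittleO
      hsqrt
  refine hasPrimeDensity_of_tendsto_sum_log ?_
  have hlim : Tendsto (fun x => ψ x / x - (ψ x - θ x) / x) atTop (𝓝 ((q.totient : ℝ)⁻¹ - 0)) :=
    (tendsto_sum_residueClass_div ha).sub hlittleO.tendsto_div_nhds_zero
  simp only [← sub_div, sub_sub_cancel, sub_zero] at hlim
  convert hlim

end ResidueClass

section SumAsymptotics

variable {ι : Type*} {l : Filter ι}

lemma isEquivalent_sum_range {a b : ℕ → ℝ} (hab : a ~[atTop] b) (hb : ∀ᶠ n in atTop, 0 ≤ b n)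
    (hsum : Tendsto (fun n => ∑ i ∈ Finset.range n, b i) atTop atTop) :
    (fun n => ∑ i ∈ Finset.range n, a i) ~[atTop] fun n => ∑ i ∈ Finset.range n, b i := by
  obtain ⟨n₀, hn₀⟩ := eventually_atTop.1 hb
  have habs : (fun n => ∑ i ∈ Finset.range n, |b i|) =O[atTop]
      fun n => ∑ i ∈ Finset.range n, b i := by
    refine IsBigO.of_bound 2 ?_
    filter_upwards [eventually_ge_atTop n₀,
      hsum.eventually_ge_atTop (∑ i ∈ Finset.range n₀, (|b i| - b i))] with n hn hlarge
    have hdiff : ∑ i ∈ Finset.range n, (|b i| - b i) = ∑ i ∈ Finset.range n₀, (|b i| - b i) :=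
      Finset.eventually_constant_sum
        (fun i hi => sub_eq_zero.2 (abs_of_nonneg (hn₀ i hi))) hn
    have hdiff_nonneg : 0 ≤ ∑ i ∈ Finset.range n, (|b i| - b i) :=
      Finset.sum_nonneg fun i _ => sub_nonneg.2 (le_abs_self _)
    rw [← hdiff] at hlarge
    rw [Real.norm_of_nonneg (Finset.sum_nonneg fun i _ => abs_nonneg _),
      Real.norm_of_nonneg (hdiff_nonneg.trans hlarge)]
    rw [Finset.sum_sub_distrib] at hlarge
    linarith
  have hsum_abs : Tendsto (fun n => ∑ i ∈ Finset.range n, |b i|) atTop atTop :=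
    tendsto_atTop_mono (fun n => Finset.sum_le_sum fun i _ => le_abs_self _) hsum
  have hlittleO := (hab.isLittleO.abs_right.sum_range (fun i => abs_nonneg _) hsum_abs).trans_isBigO
    habs
  simpa only [IsEquivalent, Pi.sub_def, Finset.sum_sub_distrib] using hlittleO

lemma isEquivalent_sum_range_of_sub {a u : ℕ → ℝ} (ha : a ~[atTop] fun n => u (n + 1) - u n)
    (hmono : ∀ᶠ n in atTop, u n ≤ u (n + 1)) (hu : Tendsto u atTop atTop) :
    (fun n => ∑ i ∈ Finset.range n, a i) ~[atTop] u := by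
  have htelescope : (fun n => ∑ i ∈ Finset.range n, (u (i + 1) - u i)) ~[atTop] u := by
    simp only [Finset.sum_range_sub]
    simp only [sub_eq_add_neg]
    exact IsEquivalent.refl.add_const_of_norm_tendsto_atTop (tendsto_norm_atTop_atTop.comp hu)
  exact (isEquivalent_sum_range ha (hmono.mono fun _ => sub_nonneg.2)
    (htelescope.symm.tendsto_atTop hu)).trans htelescope

lemma isEquivalent_sub_of_hasDerivAt {f : ℝ → ℝ} {f' x₀ : ℝ} (hf : HasDerivAt f f' x₀)
    (hf' : f' ≠ 0) {w : ι → ℝ} (hw : Tendsto w l (𝓝 x₀)) :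
    (fun i => f (w i) - f x₀) ~[l] fun i => f' * (w i - x₀) := by
  refine IsLittleO.isEquivalent (((hf.isLittleO.comp_tendsto hw).const_mul_right hf').congr_left
    fun i => ?_)
  simp [mul_comm]

lemma isEquivalent_log_sub_log {v w : ι → ℝ} (hwv : w ~[l] v) (hv : ∀ᶠ i in l, v i ≠ 0) :
    (fun i => Real.log (w i) - Real.log (v i)) ~[l] fun i => (w i - v i) / v i := by
  have hratio := (isEquivalent_iff_tendsto_one hv).1 hwv
  have h := isEquivalent_sub_of_hasDerivAt (Real.hasDerivAt_log one_ne_zero) (by simp) hratio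
  refine (h.congr_left ?_).congr_right ?_
  · filter_upwards [hv, hratio.eventually_ne one_ne_zero] with i hvi hi
    rw [Pi.div_apply] at hi ⊢
    rw [Real.log_div (div_ne_zero_iff.1 hi).1 hvi, Real.log_one, sub_zero]
  · filter_upwards [hv] with i hvi
    rw [Pi.div_apply]
    field_simp

lemma isEquivalent_pow_sub_pow {v w : ι → ℝ} (hwv : w ~[l] v) (j : ℕ) :
    (fun i => w i ^ (j + 1) - v i ^ (j + 1)) ~[l]
      fun i => (j + 1 : ℝ) * v i ^ j * (w i - v i) := by
  obtain ⟨r, hr, hrv⟩ := isEquivalent_iff_exists_eq_mul.1 hwv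
  have hderiv : HasDerivAt (fun x : ℝ => x ^ (j + 1)) (j + 1) 1 := by
    simpa using hasDerivAt_pow (j + 1) (1 : ℝ)
  have h := (IsEquivalent.refl (u := fun i => v i ^ (j + 1))).mul
    (isEquivalent_sub_of_hasDerivAt hderiv (by positivity) hr)
  refine (h.congr_left ?_).congr_right ?_ <;>
  · filter_upwards [hrv] with i hi
    simp only [hi, Pi.mul_apply]
    ring

/-- A discrete form of `∫ L ^ j dL = L ^ (j + 1) / (j + 1)`. -/
lemma isEquivalent_sum_range_sub_mul {A L f : ℕ → ℝ} {a C : ℝ} {j : ℕ} (hA : Monotone A)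
    (hL : Tendsto L atTop atTop) (hLsucc : (fun n => L (n + 1)) ~[atTop] L) (ha : 0 < a)
    (hC : 0 < C) (hAL : A ~[atTop] fun n => a * L n) (hf : f ~[atTop] fun n => C * L n ^ j) :
    (fun n => ∑ i ∈ Finset.range n, (A (i + 1) - A i) * f i) ~[atTop]
      fun n => a * C / (j + 1) * L n ^ (j + 1) := by
  set K : ℝ := C / (a ^ j * (j + 1)) with hK
  have hK_pos : 0 < K := by positivity
  have hAtop : Tendsto A atTop atTop := hAL.symm.tendsto_atTop (hL.const_mul_atTop ha)
  have hAsucc : (fun n => A (n + 1)) ~[atTop] A :=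
    (hAL.comp_tendsto (tendsto_add_atTop_nat 1)).trans
      ((IsEquivalent.refl.mul hLsucc).trans hAL.symm)
  have hfA : f ~[atTop] fun n => K * ((j + 1) * A n ^ j) := by
    refine hf.trans (((IsEquivalent.refl (u := fun _ => K * (j + 1))).mul
      (hAL.pow j)).symm.congr_left ?_ |>.congr_right ?_) <;>
    · refine .of_forall fun n => ?_
      simp only [Pi.mul_apply, Pi.pow_apply, mul_pow, hK]
      field_simp
  have hterm : (fun n => (A (n + 1) - A n) * f n) ~[atTop]
      fun n => K * A (n + 1) ^ (j + 1) - K * A n ^ (j + 1) := by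
    refine (IsEquivalent.refl.mul hfA).trans (((IsEquivalent.refl (u := fun _ => K)).mul
      (isEquivalent_pow_sub_pow hAsucc j)).symm.congr_left ?_ |>.congr_right ?_) <;>
    · refine .of_forall fun n => ?_
      simp only [Pi.mul_apply]
      ring
  have hmono : ∀ᶠ n in atTop, K * A n ^ (j + 1) ≤ K * A (n + 1) ^ (j + 1) := by
    filter_upwards [hAtop.eventually_ge_atTop 0] with n hn
    gcongr
    exact hA n.le_succ
  have hsum := isEquivalent_sum_range_of_sub (u := fun n => K * A n ^ (j + 1)) hterm hmono
    (((tendsto_pow_atTop j.succ_ne_zero).comp hAtop).const_mul_atTop hK_pos)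
  refine hsum.trans (((IsEquivalent.refl (u := fun _ => K)).mul (hAL.pow (j + 1))).congr_right ?_)
  refine .of_forall fun n => ?_
  simp only [Pi.mul_apply, Pi.pow_apply, mul_pow, hK]
  field_simp
  ring

end SumAsymptotics

section Reciprocals

lemma tendsto_log_natCast : Tendsto (fun n : ℕ => Real.log n) atTop atTop :=
  Real.tendsto_log_atTop.comp tendsto_natCast_atTop_atTop

lemma tendsto_log_log_natCast : Tendsto (fun n : ℕ => Real.log (Real.log n)) atTop atTop :=
  Real.tendsto_log_atTop.comp tendsto_log_natCast

lemma isEquivalent_natCast_succ :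
    (fun n : ℕ => ((n + 1 : ℕ) : ℝ)) ~[atTop] fun n : ℕ => (n : ℝ) := by
  simp only [Nat.cast_add]
  exact IsEquivalent.refl.add_const_of_norm_tendsto_atTop
    (tendsto_norm_atTop_atTop.comp tendsto_natCast_atTop_atTop)

lemma isEquivalent_log_natCast_succ :
    (fun n : ℕ => Real.log (n + 1 : ℕ)) ~[atTop] fun n : ℕ => Real.log n :=
  isEquivalent_natCast_succ.log tendsto_natCast_atTop_atTop

lemma isEquivalent_log_log_natCast_succ :
    (fun n : ℕ => Real.log (Real.log (n + 1 : ℕ))) ~[atTop] fun n : ℕ => Real.log (Real.log n) :=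
  isEquivalent_log_natCast_succ.log tendsto_log_natCast

lemma isEquivalent_log_log_succ_sub :
    (fun n : ℕ => Real.log (Real.log (n + 1 : ℕ)) - Real.log (Real.log n)) ~[atTop]
      fun n : ℕ => (n * Real.log n)⁻¹ := by
  have hlog := isEquivalent_log_sub_log isEquivalent_natCast_succ
    ((eventually_ne_atTop 0).mono fun n hn => Nat.cast_ne_zero.2 hn)
  have hloglog := isEquivalent_log_sub_log isEquivalent_log_natCast_succ
    (tendsto_log_natCast.eventually_ne_atTop 0)
  refine hloglog.trans ((hlog.div IsEquivalent.refl).congr_right (.of_forall fun n => ?_))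
  simp [div_eq_mul_inv, mul_comm]

/-- The sum of the reciprocals of the elements of `S` below `n`. -/
noncomputable def reciprocalSum (S : Set ℕ) (n : ℕ) : ℝ :=
  ∑ k ∈ Finset.range n with k ∈ S, (k : ℝ)⁻¹

variable {S : Set ℕ} {c : ℝ}

lemma reciprocalSum_succ (S : Set ℕ) (n : ℕ) :
    reciprocalSum S (n + 1) = reciprocalSum S n + if n ∈ S then (n : ℝ)⁻¹ else 0 := by
  simp only [reciprocalSum, Finset.sum_filter, Finset.sum_range_succ]

lemma reciprocalSum_mono (S : Set ℕ) : Monotone (reciprocalSum S) := by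
  refine monotone_nat_of_le_succ fun n => ?_
  rw [reciprocalSum_succ, le_add_iff_nonneg_right]
  positivity

lemma countUpTo_succ (S : Set ℕ) (n : ℕ) :
    (countUpTo S (n + 1 : ℕ) : ℝ) = countUpTo S n + if n + 1 ∈ S then 1 else 0 := by
  simp only [countUpTo, Nat.floor_natCast, Finset.card_filter,
    ← Finset.insert_Ioc_right_eq_Ioc_add_one n.zero_le]
  rw [Finset.sum_insert (by simp)]
  push_cast
  ring

lemma countUpTo_natCast_le (S : Set ℕ) (n : ℕ) : countUpTo S n ≤ n := by
  simpa [countUpTo] using Finset.card_filter_le (Finset.Ioc 0 n) (· ∈ S)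

lemma reciprocalSum_succ_eq_sum_countUpTo (S : Set ℕ) (n : ℕ) :
    reciprocalSum S (n + 1) = countUpTo S n / (n + 1) +
      ∑ k ∈ Finset.range (n + 1), (countUpTo S k : ℝ) / (k * (k + 1)) := by
  induction n with
  | zero => simp [reciprocalSum, countUpTo, Finset.sum_filter]
  | succ n ih =>
    rw [Finset.sum_range_succ, reciprocalSum_succ, ih, countUpTo_succ]
    push_cast
    split_ifs <;> field_simp <;> ring

lemma HasPrimeDensity.isEquivalent_countUpTo (h : HasPrimeDensity S c) (hc : c ≠ 0) :
    (fun x : ℝ => (countUpTo S x : ℝ)) ~[atTop] fun x => c * (x / Real.log x) := by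
  refine isEquivalent_of_tendsto_one ?_
  have hlim := h.div_const c
  rw [div_self hc] at hlim
  refine hlim.congr fun x => ?_
  simp only [Pi.div_apply]
  field_simp

lemma HasPrimeDensity.isEquivalent_sum_countUpTo_div (h : HasPrimeDensity S c) (hc : 0 < c) :
    (fun n => ∑ k ∈ Finset.range n, (countUpTo S k : ℝ) / (k * (k + 1))) ~[atTop]
      fun n : ℕ => c * Real.log (Real.log n) := by
  have hdelta := (IsEquivalent.refl (u := fun _ : ℕ => c)).mul isEquivalent_log_log_succ_sub
  refine isEquivalent_sum_range_of_sub (u := fun n : ℕ => c * Real.log (Real.log n)) ?_ ?_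
    (tendsto_log_log_natCast.const_mul_atTop hc)
  · have hcount := ((h.isEquivalent_countUpTo hc.ne').comp_tendsto tendsto_natCast_atTop_atTop).div
      ((IsEquivalent.refl (u := fun n : ℕ => (n : ℝ))).mul isEquivalent_natCast_succ)
    refine (hcount.congr_left (.of_forall fun n => by simp)).trans
      ((hdelta.symm.congr_left ?_).congr_right (.of_forall fun n => by simp [mul_sub]))
    filter_upwards [eventually_ne_atTop 0] with n hn
    simp only [Pi.mul_apply, Pi.div_apply, Function.comp_apply]
    field_simp
  · filter_upwards [hdelta.eventually_nonneg (.of_forall fun n => by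
      simp only [Pi.mul_apply]; positivity)] with n hn
    simpa [mul_sub] using hn

theorem HasPrimeDensity.isEquivalent_reciprocalSum (h : HasPrimeDensity S c) (hc : 0 < c) :
    reciprocalSum S ~[atTop] fun n : ℕ => c * Real.log (Real.log n) := by
  have htop : Tendsto (fun n : ℕ => c * Real.log (Real.log n)) atTop atTop :=
    tendsto_log_log_natCast.const_mul_atTop hc
  have hboundary : (fun n : ℕ => (countUpTo S n : ℝ) / (n + 1)) =O[atTop] fun _ => (1 : ℝ) := by
    refine IsBigO.of_bound 1 (.of_forall fun n => ?_)
    rw [Real.norm_of_nonneg (by positivity), norm_one, one_mul, div_le_one (by positivity)]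
    exact_mod_cast (countUpTo_natCast_le S n).trans n.le_succ
  have hlittleO := hboundary.trans_isLittleO ((isLittleO_const_left.2 (.inr
    (tendsto_norm_atTop_atTop.comp htop))).comp_tendsto (tendsto_add_atTop_nat 1))
  rw [← map_add_atTop_eq_nat 1, isEquivalent_map]
  refine (hlittleO.add_isEquivalent ((h.isEquivalent_sum_countUpTo_div hc).comp_tendsto
    (tendsto_add_atTop_nat 1))).congr_left (.of_forall fun n => ?_)
  exact (reciprocalSum_succ_eq_sum_countUpTo S n).symm

end Reciprocals

section PrimeProducts

/-- The products `p₁ * ⋯ * pₖ` with `p₁ < ⋯ < pₖ < z` and `pᵢ ∈ S i`, for sets `S i` of primes,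
generated by choosing the largest factor first. -/
noncomputable def primeProducts : {k : ℕ} → (Fin k → Set ℕ) → ℕ → Finset ℕ
  | 0, _, _ => {1}
  | k + 1, S, z => {p ∈ Finset.range z | p ∈ S (Fin.last k)}.biUnion fun p =>
      (primeProducts (Fin.init S) p).image (· * p)

variable {k : ℕ} {S : Fin k → Set ℕ} {z n : ℕ}

lemma mem_primeProducts_succ {S : Fin (k + 1) → Set ℕ} :
    n ∈ primeProducts S z ↔
      ∃ p < z, p ∈ S (Fin.last k) ∧ ∃ P ∈ primeProducts (Fin.init S) p, P * p = n := by
  simp [primeProducts, and_assoc]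

theorem mem_primeProducts_iff : n ∈ primeProducts S z ↔
    ∃ p : Fin k → ℕ, StrictMono p ∧ (∀ i, p i ∈ S i) ∧ (∀ i, p i < z) ∧ n = ∏ i, p i := by
  induction k generalizing z n with
  | zero => simp [primeProducts, Subsingleton.strictMono]
  | succ k ih =>
    simp only [mem_primeProducts_succ, ih]
    constructor
    · rintro ⟨r, hrz, hrS, -, ⟨p, hmono, hpS, hlt, rfl⟩, rfl⟩
      refine ⟨Fin.snoc p r, ?_, ?_, ?_, ?_⟩
      · rw [← Fin.insertNth_last', Fin.strictMono_insertNth_iff]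
        exact ⟨hmono, fun i _ => hlt i, fun i hi => absurd i.castSucc_lt_last hi.not_gt⟩
      · exact Fin.forall_fin_succ'.2 ⟨by simpa [Fin.init] using hpS, by simpa using hrS⟩
      · exact Fin.forall_fin_succ'.2 ⟨by simpa using fun i => (hlt i).trans hrz, by simpa using hrz⟩
      · simp [Fin.prod_univ_castSucc]
    · rintro ⟨p, hmono, hpS, hlt, rfl⟩
      exact ⟨p (Fin.last k), hlt _, hpS _, _, ⟨Fin.init p, hmono.comp Fin.strictMono_castSucc,
        fun i => hpS i.castSucc, fun i => hmono i.castSucc_lt_last, rfl⟩,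
        (Fin.prod_univ_castSucc p).symm⟩

lemma primeProducts_mono (S : Fin k → Set ℕ) : Monotone (primeProducts S) := by
  intro z z' hz n
  simp only [mem_primeProducts_iff]
  exact fun ⟨p, hmono, hS, hlt, hn⟩ => ⟨p, hmono, hS, fun i => (hlt i).trans_le hz, hn⟩

lemma le_pow_of_mem_primeProducts (hn : n ∈ primeProducts S z) : n ≤ z ^ k := by
  obtain ⟨p, -, -, hlt, rfl⟩ := mem_primeProducts_iff.1 hn
  simpa using Finset.prod_le_pow_card Finset.univ p z fun i _ => (hlt i).le

lemma pos_of_mem_primeProducts (hS : ∀ i, ∀ p ∈ S i, p.Prime) (hn : n ∈ primeProducts S z) :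
    0 < n := by
  obtain ⟨p, -, hpS, -, rfl⟩ := mem_primeProducts_iff.1 hn
  exact Finset.prod_pos fun i _ => (hS i _ (hpS i)).pos

lemma filter_primeProducts_le_eq (hS : ∀ i, ∀ p ∈ S i, p.Prime)
    (x : ℕ) : {n ∈ primeProducts S (x + 1) | n ≤ x} =
      {n ∈ Finset.range (x + 1) | ∃ p : Fin k → ℕ, StrictMono p ∧ (∀ i, p i ∈ S i) ∧
        n = ∏ i, p i} := by
  ext n
  simp only [Finset.mem_filter, Finset.mem_range, Nat.lt_succ_iff, mem_primeProducts_iff]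
  constructor
  · rintro ⟨⟨p, hmono, hpS, -, hn⟩, hnx⟩
    exact ⟨hnx, p, hmono, hpS, hn⟩
  · rintro ⟨hnx, p, hmono, hpS, rfl⟩
    refine ⟨⟨p, hmono, hpS, fun i => le_trans ?_ hnx, rfl⟩, hnx⟩
    exact Finset.single_le_prod' (fun i _ => (hS i _ (hpS i)).one_le) (Finset.mem_univ i)

lemma lt_of_prime_dvd_of_mem_primeProducts (hS : ∀ i, ∀ p ∈ S i, p.Prime)
    (hn : n ∈ primeProducts S z) {r : ℕ} (hr : r.Prime) (hrn : r ∣ n) : r < z := by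
  obtain ⟨p, -, hpS, hlt, rfl⟩ := mem_primeProducts_iff.1 hn
  obtain ⟨i, -, hi⟩ := (Prime.dvd_finsetProd_iff hr.prime _).1 hrn
  exact (Nat.prime_dvd_prime_iff_eq hr (hS i _ (hpS i))).1 hi ▸ hlt i

lemma le_of_mul_eq_mul_of_mem_primeProducts (hS : ∀ i, ∀ p ∈ S i, p.Prime) {p p' P P' : ℕ}
    (hP' : P' ∈ primeProducts S p') (hp : p.Prime) (hp' : p'.Prime) (h : P * p = P' * p') :
    p ≤ p' := by
  rcases hp.dvd_mul.1 (h ▸ Dvd.intro_left P rfl : p ∣ P' * p') with hdvd | hdvd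
  · exact (lt_of_prime_dvd_of_mem_primeProducts hS hP' hp hdvd).le
  · exact ((Nat.prime_dvd_prime_iff_eq hp hp').1 hdvd).le

lemma sum_primeProducts_succ {S : Fin (k + 1) → Set ℕ} (hS : ∀ i, ∀ p ∈ S i, p.Prime)
    (z : ℕ) (f : ℕ → ℝ) :
    ∑ n ∈ primeProducts S z, f n =
      ∑ p ∈ Finset.range z with p ∈ S (Fin.last k),
        ∑ P ∈ primeProducts (Fin.init S) p, f (P * p) := by
  have hinit : ∀ i, ∀ p ∈ Fin.init S i, p.Prime := fun i => hS i.castSucc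
  rw [primeProducts, Finset.sum_biUnion]
  · refine Finset.sum_congr rfl fun p hp => Finset.sum_image fun P _ P' _ h => ?_
    exact Nat.eq_of_mul_eq_mul_right (hS _ _ (Finset.mem_filter.1 hp).2).pos h
  · intro p hp p' hp' hne
    have hprime := hS _ _ (Finset.mem_filter.1 hp).2
    have hprime' := hS _ _ (Finset.mem_filter.1 hp').2
    refine Finset.disjoint_left.2 fun n hn hn' => hne ?_
    obtain ⟨P, hP, rfl⟩ := Finset.mem_image.1 hn
    obtain ⟨P', hP', h⟩ := Finset.mem_image.1 hn'
    exact le_antisymm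
      (le_of_mul_eq_mul_of_mem_primeProducts hinit hP' hprime hprime' h.symm)
      (le_of_mul_eq_mul_of_mem_primeProducts hinit hP hprime' hprime h)

/-- The sum of the reciprocals of the elements of `primeProducts S z`. -/
noncomputable def primeProductSum (S : Fin k → Set ℕ) (z : ℕ) : ℝ :=
  ∑ P ∈ primeProducts S z, (P : ℝ)⁻¹

lemma primeProductSum_succ {S : Fin (k + 1) → Set ℕ} (hS : ∀ i, ∀ p ∈ S i, p.Prime) (z : ℕ) :
    primeProductSum S z =
      ∑ p ∈ Finset.range z, (reciprocalSum (S (Fin.last k)) (p + 1) -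
        reciprocalSum (S (Fin.last k)) p) * primeProductSum (Fin.init S) p := by
  rw [primeProductSum, sum_primeProducts_succ hS, Finset.sum_filter]
  refine Finset.sum_congr rfl fun p _ => ?_
  rw [reciprocalSum_succ, add_sub_cancel_left, ite_mul, zero_mul, primeProductSum, Finset.mul_sum]
  simp [mul_comm]

theorem isEquivalent_primeProductSum {c : Fin k → ℝ} (hS : ∀ i, ∀ p ∈ S i, p.Prime)
    (hc : ∀ i, 0 < c i) (hdensity : ∀ i, HasPrimeDensity (S i) (c i)) :
    primeProductSum S ~[atTop]
      fun n : ℕ => (∏ i, c i) / k.factorial * Real.log (Real.log n) ^ k := by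
  induction k with
  | zero => exact EventuallyEq.isEquivalent (.of_forall fun n => by
      simp [primeProductSum, primeProducts])
  | succ k ih =>
    have hinit := ih (S := Fin.init S) (c := Fin.init c) (fun i => hS i.castSucc)
      (fun i => hc i.castSucc) fun i => hdensity i.castSucc
    have hsum := isEquivalent_sum_range_sub_mul (reciprocalSum_mono (S (Fin.last k)))
      tendsto_log_log_natCast isEquivalent_log_log_natCast_succ (hc (Fin.last k))
      (div_pos (Finset.prod_pos fun i _ => hc i.castSucc) (by positivity))
      ((hdensity (Fin.last k)).isEquivalent_reciprocalSum (hc (Fin.last k))) hinit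
    refine (hsum.congr_left (.of_forall fun n => (primeProductSum_succ hS n).symm)).congr_right
      (.of_forall fun n => ?_)
    simp only [Fin.prod_univ_castSucc, Nat.factorial_succ, Fin.init]
    push_cast
    field_simp

end PrimeProducts

section Fibers

variable {α ι : Type*} {l : Filter α} {s : α → Finset ι}

/-- The pairs `(a, i)` with `i ∈ s a` as `a` tends along `l`: an asymptotic relation along
`fiberFilter l s` is one along `l` holding uniformly in `i ∈ s a`. -/
def fiberFilter (l : Filter α) (s : α → Finset ι) : Filter (α × ι) :=
  comap Prod.fst l ⊓ 𝓟 {a | a.2 ∈ s a.1}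

lemma eventually_fiberFilter {p : α × ι → Prop} :
    (∀ᶠ a in fiberFilter l s, p a) ↔ ∀ᶠ a in l, ∀ i ∈ s a, p (a, i) := by
  simp [fiberFilter, eventually_inf_principal, eventually_comap, forall_comm (α := α)]

lemma tendsto_fst_fiberFilter : Tendsto Prod.fst (fiberFilter l s) l :=
  tendsto_comap.mono_left inf_le_left

lemma fiberFilter_mono {t : α → Finset ι} (h : ∀ a, s a ⊆ t a) :
    fiberFilter l s ≤ fiberFilter l t :=
  inf_le_inf_left _ (principal_mono.2 fun a ha => h a.1 ha)

lemma sum_bound_of_fiberFilter {f g : α × ι → ℝ} {C : ℝ} (hg : ∀ a, 0 ≤ g a)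
    (h : ∀ᶠ a in fiberFilter l s, ‖f a‖ ≤ C * ‖g a‖) :
    ∀ᶠ a in l, ‖∑ i ∈ s a, f (a, i)‖ ≤ C * ‖∑ i ∈ s a, g (a, i)‖ := by
  filter_upwards [eventually_fiberFilter.1 h] with a ha
  rw [Real.norm_of_nonneg (Finset.sum_nonneg fun i _ => hg (a, i)), Finset.mul_sum]
  exact norm_sum_le_of_le _ fun i hi => by
    simpa only [Real.norm_of_nonneg (hg (a, i))] using ha i hi

lemma isBigO_sum_of_fiberFilter {f g : α × ι → ℝ} (hg : ∀ a, 0 ≤ g a)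
    (h : f =O[fiberFilter l s] g) :
    (fun a => ∑ i ∈ s a, f (a, i)) =O[l] fun a => ∑ i ∈ s a, g (a, i) := by
  obtain ⟨C, hC⟩ := h.bound
  exact IsBigO.of_bound C (sum_bound_of_fiberFilter hg hC)

lemma isEquivalent_sum_of_fiberFilter {f g : α × ι → ℝ} (hg : ∀ a, 0 ≤ g a)
    (h : f ~[fiberFilter l s] g) :
    (fun a => ∑ i ∈ s a, f (a, i)) ~[l] fun a => ∑ i ∈ s a, g (a, i) := by
  refine IsLittleO.of_bound fun C hC => ?_
  simpa only [Pi.sub_apply, Finset.sum_sub_distrib] using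
    sum_bound_of_fiberFilter hg (h.isLittleO.bound hC)

end Fibers

section Threshold

/-- The cutoff `x ^ (1 / log log x)`, rounded down. Its fixed powers are negligible against `x`, and
yet its iterated logarithm is asymptotically that of `x`. -/
noncomputable def threshold (x : ℕ) : ℕ := ⌊Real.exp (Real.log x / Real.log (Real.log x))⌋₊

lemma threshold_le (x : ℕ) :
    (threshold x : ℝ) ≤ Real.exp (Real.log x / Real.log (Real.log x)) :=
  Nat.floor_le (Real.exp_pos _).le

lemma eventually_threshold_le : ∀ᶠ x in atTop, threshold x ≤ x := by
  filter_upwards [tendsto_log_log_natCast.eventually_ge_atTop 1, eventually_gt_atTop 0]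
    with x hloglog hx
  refine Nat.floor_le_of_le ?_
  calc Real.exp (Real.log x / Real.log (Real.log x)) ≤ Real.exp (Real.log x) :=
        Real.exp_le_exp.2 (div_le_self (Real.log_natCast_nonneg x) hloglog)
    _ = x := Real.exp_log (Nat.cast_pos.2 hx)

lemma tendsto_log_div_log_log :
    Tendsto (fun x : ℕ => Real.log x / Real.log (Real.log x)) atTop atTop := by
  have hexp := (tendsto_exp_div_rpow_atTop 1).comp tendsto_log_log_natCast
  refine hexp.congr' ?_
  filter_upwards [tendsto_log_natCast.eventually_gt_atTop 0] with x hx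
  simp [Real.exp_log hx]

lemma tendsto_threshold : Tendsto threshold atTop atTop :=
  tendsto_nat_floor_atTop.comp (Real.tendsto_exp_atTop.comp tendsto_log_div_log_log)

lemma isEquivalent_log_threshold :
    (fun x => Real.log (threshold x)) ~[atTop] fun x : ℕ => Real.log x / Real.log (Real.log x) := by
  have hexp := Real.tendsto_exp_atTop.comp tendsto_log_div_log_log
  simpa [threshold] using (isEquivalent_nat_floor.comp_tendsto hexp).log hexp

lemma isLittleO_log_div_log_log :
    (fun x : ℕ => Real.log x / Real.log (Real.log x)) =o[atTop] fun x : ℕ => Real.log x := by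
  have hinv := (isBigO_refl (fun x : ℕ => Real.log x) atTop).mul_isLittleO
    ((isLittleO_one_iff ℝ).2 tendsto_log_log_natCast.inv_tendsto_atTop)
  simpa [div_eq_mul_inv] using hinv

lemma isLittleO_log_threshold :
    (fun x => Real.log (threshold x)) =o[atTop] fun x : ℕ => Real.log x :=
  isEquivalent_log_threshold.trans_isLittleO isLittleO_log_div_log_log

lemma isEquivalent_log_log_threshold :
    (fun x => Real.log (Real.log (threshold x))) ~[atTop]
      fun x : ℕ => Real.log (Real.log x) := by
  have hlog := isEquivalent_log_threshold.log tendsto_log_div_log_log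
  have hloglog : (fun x : ℕ => Real.log (Real.log x / Real.log (Real.log x))) ~[atTop]
      fun x : ℕ => Real.log (Real.log x) := by
    refine (IsEquivalent.refl.sub_isLittleO
      (Real.isLittleO_log_id_atTop.comp_tendsto tendsto_log_log_natCast)).congr_left ?_
    filter_upwards [tendsto_log_natCast.eventually_ne_atTop 0,
      tendsto_log_log_natCast.eventually_ne_atTop 0] with x hlog hloglog
    exact (Real.log_div hlog hloglog).symm
  exact hlog.trans hloglog

lemma isLittleO_threshold_pow (j : ℕ) :
    (fun x => (threshold x : ℝ) ^ j) =o[atTop] fun x : ℕ => x / Real.log x := by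
  have hbound : (fun x => (threshold x : ℝ) ^ j) =O[atTop]
      fun x : ℕ => Real.exp (j * (Real.log x / Real.log (Real.log x))) := by
    refine IsBigO.of_bound' (.of_forall fun x => ?_)
    rw [Real.norm_of_nonneg (by positivity), Real.norm_of_nonneg (by positivity), Real.exp_nat_mul]
    gcongr
    exact threshold_le x
  have hexponent : Tendsto (fun x : ℕ => Real.log x - Real.log (Real.log x) -
      j * (Real.log x / Real.log (Real.log x))) atTop atTop :=
    ((IsEquivalent.refl.sub_isLittleO
      (Real.isLittleO_log_id_atTop.comp_tendsto tendsto_log_natCast)).sub_isLittleO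
      (isLittleO_log_div_log_log.const_mul_left (j : ℝ))).symm.tendsto_atTop tendsto_log_natCast
  refine (hbound.trans_isLittleO (Real.isLittleO_exp_comp_exp_comp.2 hexponent)).congr' .rfl ?_
  filter_upwards [eventually_gt_atTop 0, tendsto_log_natCast.eventually_gt_atTop 0] with x hx hlog
  rw [Real.exp_sub, Real.exp_log (Nat.cast_pos.2 hx), Real.exp_log hlog]

end Threshold

section Counting

variable {k : ℕ} {S : Fin k → Set ℕ} {x P w : ℕ}

/-- The number of products `P * p ≤ x` with largest factor `p ∈ R` and cofactor `P`, the latter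
being a product of smaller factors taken from the sets `S i`. -/
noncomputable def cofactorCount (S : Fin k → Set ℕ) (R : Set ℕ) (x P : ℕ) : ℕ :=
  #{p ∈ Finset.range (x + 1) | p ∈ R ∧ P ∈ primeProducts S p ∧ P * p ≤ x}

variable {R : Set ℕ}

lemma card_primeProducts_eq_sum {S : Fin (k + 1) → Set ℕ} (hS : ∀ i, ∀ p ∈ S i, p.Prime) (x : ℕ) :
    (#{n ∈ primeProducts S (x + 1) | n ≤ x} : ℝ) =
      ∑ P ∈ primeProducts (Fin.init S) (x + 1),
        (cofactorCount (Fin.init S) (S (Fin.last k)) x P : ℝ) := by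
  rw [← Finset.sum_boole, sum_primeProducts_succ hS, Finset.sum_comm'
    (t' := primeProducts (Fin.init S) (x + 1)) (s' := fun P =>
      {p ∈ Finset.range (x + 1) | p ∈ S (Fin.last k) ∧ P ∈ primeProducts (Fin.init S) p})]
  · refine Finset.sum_congr rfl fun P _ => ?_
    rw [Finset.sum_boole, Finset.filter_filter]
    simp only [cofactorCount, and_assoc]
  · intro p P
    simp only [Finset.mem_filter, Finset.mem_range]
    exact ⟨fun ⟨⟨hpx, hp⟩, hP⟩ => ⟨⟨hpx, hp, hP⟩, primeProducts_mono _ hpx.le hP⟩,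
      fun ⟨⟨hpx, hp, hP⟩, _⟩ => ⟨⟨hpx, hp⟩, hP⟩⟩

lemma cofactorCount_le (hR : ∀ p ∈ R, p.Prime) (hP : 0 < P) :
    cofactorCount S R x P ≤ countUpTo R (x / P) := by
  refine Finset.card_le_card fun p hp => ?_
  simp only [Finset.mem_filter, Finset.mem_Ioc] at hp ⊢
  obtain ⟨-, hpR, -, hle⟩ := hp
  rw [Nat.floor_div_eq_div, Nat.le_div_iff_mul_le hP, mul_comm]
  exact ⟨⟨(hR p hpR).pos, hle⟩, hpR⟩

lemma countUpTo_le_cofactorCount_add (hS : ∀ i, ∀ p ∈ S i, p.Prime) (hP : P ∈ primeProducts S w) :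
    countUpTo R (x / P) ≤ cofactorCount S R x P + w := by
  have hpos := pos_of_mem_primeProducts hS hP
  have hsubset : {p ∈ Finset.Ioc 0 ⌊(x : ℝ) / P⌋₊ | p ∈ R} ⊆
      {p ∈ Finset.range (x + 1) | p ∈ R ∧ P ∈ primeProducts S p ∧ P * p ≤ x} ∪
        Finset.range w := by
    intro p hp
    simp only [Finset.mem_filter, Finset.mem_Ioc, Finset.mem_union, Finset.mem_range] at hp ⊢
    obtain ⟨⟨-, hle⟩, hpR⟩ := hp
    rw [Nat.floor_div_eq_div, Nat.le_div_iff_mul_le hpos, mul_comm] at hle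
    refine (lt_or_ge p w).symm.imp_left fun hwp => ⟨?_, hpR, primeProducts_mono S hwp hP, hle⟩
    exact Nat.lt_succ_of_le ((Nat.le_mul_of_pos_left p hpos).trans hle)
  simpa [countUpTo, cofactorCount] using
    (Finset.card_le_card hsubset).trans (Finset.card_union_le _ _)

lemma le_pow_of_cofactorCount_ne_zero (hP : 0 < P) (h : cofactorCount S R x P ≠ 0) :
    (x : ℝ) ≤ (x / P) ^ (k + 1) := by
  obtain ⟨p, hp⟩ := Finset.card_ne_zero.1 h
  obtain ⟨-, -, hPp, hle⟩ := Finset.mem_filter.1 hp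
  have hP' : (0 : ℝ) < P := Nat.cast_pos.2 hP
  have hp_le : (p : ℝ) ≤ x / P := by
    rw [le_div_iff₀ hP', mul_comm]
    exact_mod_cast hle
  calc (x : ℝ) = P * (x / P) := by field_simp
    _ ≤ p ^ k * (x / P) := by gcongr; exact_mod_cast le_pow_of_mem_primeProducts hPp
    _ ≤ (x / P) ^ k * (x / P) := by gcongr
    _ = (x / P) ^ (k + 1) := (pow_succ _ _).symm

end Counting

section Asymptotics

variable {k : ℕ} {S : Fin k → Set ℕ} {R : Set ℕ} {c : ℝ}

/-- The cofactors below the threshold, uniformly as `x → ∞`. -/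
noncomputable abbrev smallCofactors (S : Fin k → Set ℕ) : Filter (ℕ × ℕ) :=
  fiberFilter atTop fun x => primeProducts S (threshold x)

lemma eventually_smallCofactors (hS : ∀ i, ∀ p ∈ S i, p.Prime) :
    ∀ᶠ a in smallCofactors S, 0 < a.2 ∧ a.2 ≤ threshold a.1 ^ k :=
  eventually_fiberFilter.2 (.of_forall fun _ _ hP =>
    ⟨pos_of_mem_primeProducts hS hP, le_pow_of_mem_primeProducts hP⟩)

lemma isEquivalent_log_div_cofactor (hS : ∀ i, ∀ p ∈ S i, p.Prime) :
    (fun a => Real.log (a.1 / a.2)) ~[smallCofactors S] fun a => Real.log a.1 := by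
  have hcofactor : (fun a => Real.log a.2) =O[smallCofactors S]
      fun a => Real.log (threshold a.1) := by
    refine IsBigO.of_bound k ((eventually_smallCofactors hS).mono fun a ⟨hpos, hle⟩ => ?_)
    rw [Real.norm_of_nonneg (Real.log_natCast_nonneg _),
      Real.norm_of_nonneg (Real.log_natCast_nonneg _), ← Real.log_pow]
    exact Real.log_le_log (Nat.cast_pos.2 hpos) (by exact_mod_cast hle)
  refine (IsEquivalent.refl.sub_isLittleO (hcofactor.trans_isLittleO
    (isLittleO_log_threshold.comp_tendsto tendsto_fst_fiberFilter))).congr_left ?_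
  filter_upwards [eventually_smallCofactors hS,
    tendsto_fst_fiberFilter.eventually (eventually_ne_atTop 0)] with a ⟨hpos, _⟩ hne
  exact (Real.log_div (Nat.cast_ne_zero.2 hne) (Nat.cast_ne_zero.2 hpos.ne')).symm

lemma tendsto_div_cofactor (hS : ∀ i, ∀ p ∈ S i, p.Prime) :
    Tendsto (fun a : ℕ × ℕ => (a.1 / a.2 : ℝ)) (smallCofactors S) atTop := by
  have hlog := (isEquivalent_log_div_cofactor hS).symm.tendsto_atTop
    (tendsto_log_natCast.comp tendsto_fst_fiberFilter)
  refine (Real.tendsto_exp_atTop.comp hlog).congr' ?_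
  filter_upwards [eventually_smallCofactors hS,
    tendsto_fst_fiberFilter.eventually (eventually_gt_atTop 0)] with a ⟨hpos, _⟩ hx
  exact Real.exp_log (div_pos (Nat.cast_pos.2 hx) (Nat.cast_pos.2 hpos))

lemma isLittleO_threshold_cofactor (hS : ∀ i, ∀ p ∈ S i, p.Prime) :
    (fun a => (threshold a.1 : ℝ)) =o[smallCofactors S]
      fun a => a.1 / Real.log a.1 * (a.2 : ℝ)⁻¹ := by
  have hbound : (fun a => (threshold a.1 : ℝ)) =O[smallCofactors S]
      fun a => (threshold a.1 : ℝ) ^ (k + 1) * (a.2 : ℝ)⁻¹ := by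
    refine IsBigO.of_bound' ((eventually_smallCofactors hS).mono fun a ⟨hpos, hle⟩ => ?_)
    have hpos' : (0 : ℝ) < a.2 := Nat.cast_pos.2 hpos
    rw [Real.norm_of_nonneg (by positivity), Real.norm_of_nonneg (by positivity),
      ← div_eq_mul_inv, le_div_iff₀ hpos', pow_succ']
    gcongr
    exact_mod_cast hle
  exact hbound.trans_isLittleO (((isLittleO_threshold_pow (k + 1)).comp_tendsto
    tendsto_fst_fiberFilter).mul_isBigO (isBigO_refl _ _))

lemma isEquivalent_countUpTo_cofactor (hS : ∀ i, ∀ p ∈ S i, p.Prime) (hc : 0 < c)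
    (hdensity : HasPrimeDensity R c) :
    (fun a => (countUpTo R (a.1 / a.2) : ℝ)) ~[smallCofactors S]
      fun a => c * (a.1 / Real.log a.1 * (a.2 : ℝ)⁻¹) := by
  have hcount := (hdensity.isEquivalent_countUpTo hc.ne').comp_tendsto (tendsto_div_cofactor hS)
  have hlog := (IsEquivalent.refl (u := fun a : ℕ × ℕ => c * (a.1 / a.2 : ℝ))).div
    (isEquivalent_log_div_cofactor hS)
  refine hcount.trans ((hlog.congr_left (.of_forall fun a => ?_)).congr_right
    (.of_forall fun a => ?_))
  · simp [mul_div_assoc]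
  · simp only [Pi.div_apply]
    ring

lemma isEquivalent_cofactorCount (hS : ∀ i, ∀ p ∈ S i, p.Prime) (hR : ∀ p ∈ R, p.Prime)
    (hc : 0 < c) (hdensity : HasPrimeDensity R c) :
    (fun a => (cofactorCount S R a.1 a.2 : ℝ)) ~[smallCofactors S]
      fun a => c * (a.1 / Real.log a.1 * (a.2 : ℝ)⁻¹) := by
  have hdiff : (fun a => (cofactorCount S R a.1 a.2 - countUpTo R (a.1 / a.2) : ℝ))
      =O[smallCofactors S] fun a => (threshold a.1 : ℝ) := by
    refine IsBigO.of_bound' (eventually_fiberFilter.2 (.of_forall fun x P hP => ?_))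
    have hle := cofactorCount_le (S := S) (x := x) hR (pos_of_mem_primeProducts hS hP)
    have hge := countUpTo_le_cofactorCount_add (R := R) (x := x) hS hP
    rw [Real.norm_natCast, Real.norm_eq_abs, abs_le]
    constructor
    · have : (countUpTo R (x / P) : ℝ) ≤ cofactorCount S R x P + threshold x := by
        exact_mod_cast hge
      linarith
    · have : (cofactorCount S R x P : ℝ) ≤ countUpTo R (x / P) := by exact_mod_cast hle
      have := (threshold x).cast_nonneg (α := ℝ)
      linarith
  have hsmall := (hdiff.trans_isLittleO (isLittleO_threshold_cofactor hS)).trans_isBigO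
    (isBigO_self_const_mul hc.ne' _ _)
  exact ((isEquivalent_countUpTo_cofactor hS hc hdensity).add_isLittleO hsmall).congr_left
    (.of_forall fun a => add_sub_cancel _ _)

lemma HasPrimeDensity.exists_eventually_countUpTo_le (hdensity : HasPrimeDensity R c) (hc : c ≠ 0)
    (j : ℕ) : ∃ C, 0 ≤ C ∧ ∀ᶠ x : ℝ in atTop, ∀ y, 0 ≤ y → x ≤ y ^ j →
      countUpTo R y ≤ C * (y / Real.log x) := by
  obtain ⟨C, hC, hbound⟩ := ((hdensity.isEquivalent_countUpTo hc).isBigO.trans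
    (isBigO_const_mul_self c _ _)).exists_nonneg
  obtain ⟨Y, hY⟩ := eventually_atTop.1 hbound.bound
  refine ⟨C * j, by positivity, ?_⟩
  filter_upwards [eventually_gt_atTop (|Y| ^ j), eventually_gt_atTop 1] with x hxY hx y hy hpow
  have hlog_le : Real.log x ≤ j * Real.log y :=
    (Real.log_le_log (by positivity) hpow).trans_eq (Real.log_pow y j)
  have hlogx : 0 < Real.log x := Real.log_pos hx
  have hlogy : 0 < Real.log y := pos_of_mul_pos_right (hlogx.trans_le hlog_le) (Nat.cast_nonneg j)
  have hYy : Y ≤ y := (le_abs_self Y).trans (lt_of_pow_lt_pow_left₀ j hy (hxY.trans_le hpow)).le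
  calc (countUpTo R y : ℝ) ≤ C * (y / Real.log y) := by
        simpa [abs_of_nonneg (div_nonneg hy hlogy.le), -norm_div] using hY y hYy
    _ ≤ C * (j * (y / Real.log x)) := by
        gcongr
        rw [div_le_iff₀ hlogy, mul_assoc, div_mul_eq_mul_div, ← mul_div_assoc, le_div_iff₀ hlogx]
        nlinarith
    _ = C * j * (y / Real.log x) := by ring

lemma isBigO_cofactorCount (hS : ∀ i, ∀ p ∈ S i, p.Prime) (hR : ∀ p ∈ R, p.Prime)
    (hc : c ≠ 0) (hdensity : HasPrimeDensity R c) :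
    (fun a => (cofactorCount S R a.1 a.2 : ℝ))
      =O[fiberFilter atTop fun x => primeProducts S (x + 1)]
      fun a => a.1 / Real.log a.1 * (a.2 : ℝ)⁻¹ := by
  obtain ⟨C, hC, hbound⟩ := hdensity.exists_eventually_countUpTo_le hc (k + 1)
  refine IsBigO.of_bound C (eventually_fiberFilter.2 ?_)
  filter_upwards [tendsto_natCast_atTop_atTop.eventually hbound] with x hx P hP
  have hpos := pos_of_mem_primeProducts hS hP
  rw [Real.norm_natCast, Real.norm_of_nonneg (by positivity)]
  rcases eq_or_ne (cofactorCount S R x P) 0 with hzero | hne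
  · rw [hzero, Nat.cast_zero]
    positivity
  calc (cofactorCount S R x P : ℝ) ≤ countUpTo R (x / P) := by
        exact_mod_cast cofactorCount_le hR hpos
    _ ≤ C * (x / P / Real.log x) :=
        hx _ (by positivity) (le_pow_of_cofactorCount_ne_zero hpos hne)
    _ = C * (x / Real.log x * (P : ℝ)⁻¹) := by ring

lemma isEquivalent_primeProductSum_threshold {c : Fin k → ℝ} (hS : ∀ i, ∀ p ∈ S i, p.Prime)
    (hc : ∀ i, 0 < c i) (hdensity : ∀ i, HasPrimeDensity (S i) (c i)) :
    (fun x => primeProductSum S (threshold x)) ~[atTop]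
      fun x : ℕ => (∏ i, c i) / k.factorial * Real.log (Real.log x) ^ k :=
  ((isEquivalent_primeProductSum hS hc hdensity).comp_tendsto tendsto_threshold).trans
    (IsEquivalent.refl.mul (isEquivalent_log_log_threshold.pow k))

lemma isLittleO_primeProductSum_sub {c : Fin k → ℝ} (hS : ∀ i, ∀ p ∈ S i, p.Prime)
    (hc : ∀ i, 0 < c i) (hdensity : ∀ i, HasPrimeDensity (S i) (c i)) :
    (fun x => primeProductSum S (x + 1) - primeProductSum S (threshold x)) =o[atTop]
      fun x => primeProductSum S (threshold x) := by
  have hsucc := ((isEquivalent_primeProductSum hS hc hdensity).comp_tendsto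
    (tendsto_add_atTop_nat 1)).trans
      (IsEquivalent.refl.mul (isEquivalent_log_log_natCast_succ.pow k))
  exact (hsucc.trans (isEquivalent_primeProductSum_threshold hS hc hdensity).symm).isLittleO

lemma isEquivalent_sum_cofactorCount {b : Fin k → ℝ} (hS : ∀ i, ∀ p ∈ S i, p.Prime)
    (hb : ∀ i, 0 < b i) (hdensityS : ∀ i, HasPrimeDensity (S i) (b i)) (hR : ∀ p ∈ R, p.Prime)
    (hc : 0 < c) (hdensity : HasPrimeDensity R c) :
    (fun x => ∑ P ∈ primeProducts S (x + 1), (cofactorCount S R x P : ℝ)) ~[atTop]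
      fun x : ℕ => c * (x / Real.log x * primeProductSum S (threshold x)) := by
  have hnonneg : ∀ a : ℕ × ℕ, 0 ≤ a.1 / Real.log a.1 * (a.2 : ℝ)⁻¹ := fun a => by positivity
  have hsubset : ∀ᶠ x in atTop, primeProducts S (threshold x) ⊆ primeProducts S (x + 1) :=
    eventually_threshold_le.mono fun x hx => primeProducts_mono S (hx.trans x.le_succ)
  have hmain : (fun x => ∑ P ∈ primeProducts S (threshold x), (cofactorCount S R x P : ℝ)) ~[atTop]
      fun x : ℕ => c * (x / Real.log x * primeProductSum S (threshold x)) := by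
    simpa only [← Finset.mul_sum, primeProductSum] using
      isEquivalent_sum_of_fiberFilter (fun a => mul_nonneg hc.le (hnonneg a))
        (isEquivalent_cofactorCount hS hR hc hdensity)
  have htail : (fun x => ∑ P ∈ primeProducts S (x + 1) \ primeProducts S (threshold x),
      (cofactorCount S R x P : ℝ)) =O[atTop]
      fun x : ℕ => x / Real.log x *
        (primeProductSum S (x + 1) - primeProductSum S (threshold x)) := by
    refine (isBigO_sum_of_fiberFilter hnonneg
      ((isBigO_cofactorCount hS hR hc.ne' hdensity).mono
        (fiberFilter_mono fun x => Finset.sdiff_subset))).congr' .rfl (hsubset.mono fun x hx => ?_)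
    simp only [← Finset.mul_sum, primeProductSum, ← Finset.sum_sdiff_eq_sub hx]
  have hnegligible := (htail.trans_isLittleO ((isBigO_refl _ _).mul_isLittleO
    (isLittleO_primeProductSum_sub hS hb hdensityS))).trans_isBigO
      (isBigO_self_const_mul hc.ne' _ _)
  refine (hmain.add_isLittleO hnegligible).congr_left (hsubset.mono fun x hx => ?_)
  rw [Pi.add_apply, add_comm, Finset.sum_sdiff hx]

theorem isEquivalent_card_primeProducts {S : Fin (k + 1) → Set ℕ} {c : Fin (k + 1) → ℝ}
    (hS : ∀ i, ∀ p ∈ S i, p.Prime) (hc : ∀ i, 0 < c i)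
    (hdensity : ∀ i, HasPrimeDensity (S i) (c i)) :
    (fun x : ℕ => (#{n ∈ primeProducts S (x + 1) | n ≤ x} : ℝ)) ~[atTop] fun x : ℕ =>
      (∏ i, c i) * (x * Real.log (Real.log x) ^ k / (k.factorial * Real.log x)) := by
  have hinit : ∀ i, ∀ p ∈ Fin.init S i, p.Prime := fun i => hS i.castSucc
  have hsum := isEquivalent_sum_cofactorCount hinit (b := Fin.init c) (fun i => hc i.castSucc)
    (fun i => hdensity i.castSucc) (hS (Fin.last k)) (hc (Fin.last k)) (hdensity (Fin.last k))
  have hreciprocal := isEquivalent_primeProductSum_threshold hinit (c := Fin.init c)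
    (fun i => hc i.castSucc) fun i => hdensity i.castSucc
  refine (hsum.congr_left (.of_forall fun x => (card_primeProducts_eq_sum hS x).symm)).trans
    (((IsEquivalent.refl (u := fun x : ℕ => c (Fin.last k) * (x / Real.log x))).mul
      hreciprocal).congr_left (.of_forall fun x => ?_) |>.congr_right (.of_forall fun x => ?_))
  · simp only [Pi.mul_apply, mul_assoc]
  · simp only [Pi.mul_apply, Fin.prod_univ_castSucc, Fin.init]
    field_simp

end Asymptotics

theorem stmt_6_general (N : ℕ) (hN : 1 ≤ N) (k : ℕ) (hk : 1 ≤ k)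
    (m : Fin k → (ZMod N)ˣ) :
    IsEquivalent atTop
      (fun x : ℕ => (((Finset.range (x + 1)).filter
          (fun n => ∃ p : Fin k → ℕ, StrictMono p ∧ (∀ i, (p i).Prime) ∧
            n = ∏ i, p i ∧ ∀ i, (p i : ZMod N) = (m i : ZMod N))).card : ℝ))
      (fun x : ℕ => (1 / (N.totient : ℝ) ^ k) *
          (x * (Real.log (Real.log x)) ^ (k - 1) /
            ((k - 1).factorial * Real.log x))) := by
  obtain ⟨j, rfl⟩ := Nat.exists_eq_add_of_le' hk
  have : NeZero N := ⟨by omega⟩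
  have hprime : ∀ i, ∀ p ∈ {p : ℕ | p.Prime ∧ (p : ZMod N) = m i}, p.Prime := fun i p hp => hp.1
  have hcount := isEquivalent_card_primeProducts (c := fun _ => (N.totient : ℝ)⁻¹) hprime
    (fun _ => by simpa using Nat.pos_of_neZero N) fun i => hasPrimeDensity_residueClass (m i).isUnit
  refine (hcount.congr_left (.of_forall fun x => ?_)).congr_right (.of_forall fun x => by simp)
  simp only [filter_primeProducts_le_eq hprime]
  congr! 6
  simp only [mem_ofPred_eq, forall_and]
  tauto

theorem stmt_6 (N : ℕ) (hN : 1 ≤ N) (k : ℕ) (hk : 2 ≤ k)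
    (m : Fin k → (ZMod N)ˣ) :
    IsEquivalent atTop
      (fun x : ℕ => (((Finset.range (x + 1)).filter
          (fun n => ∃ p : Fin k → ℕ, StrictMono p ∧ (∀ i, (p i).Prime) ∧
            n = ∏ i, p i ∧ ∀ i, (p i : ZMod N) = (m i : ZMod N))).card : ℝ))
      (fun x : ℕ => (1 / (N.totient : ℝ) ^ k) *
          (x * (Real.log (Real.log x)) ^ (k - 1) /
            ((k - 1).factorial * Real.log x))) :=
  stmt_6_general N hN k (by omega) m
end
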